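/- arXiv:1112.3619 — 3 statements merged into one kernel-verified Lean document; each statement's English description precedes it below -/
import Mathlib

section
/- Let n ≥ 1 and P_n = ℤ[X_1,…,X_n]. For each w ∈ S_n choose a reduced expression w = s_{i_1}⋯s_{i_r} (with r = r(w) the number of inversions of w) and set ∂_w = ∂_{i_1}∘⋯∘∂_{i_r}. Then the family (∂_w(X_2 X_3² ⋯ X_n^{n−1}))_{w ∈ S_n} is a basis of P_n as a module over the subring P_n^{S_n} of symmetric polynomials. -/
open MvPolynomial

/-- The adjacent transposition `s i = (i, i+1)` in the symmetric group on `{1, …, n+1}`. -/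
def adjTrans (n : ℕ) (i : Fin n) : Equiv.Perm (Fin (n + 1)) :=
  Equiv.swap i.castSucc i.succ

/-- The number of inversions of a permutation `w` of `{1, …, n+1}`. -/
def inversions (n : ℕ) (w : Equiv.Perm (Fin (n + 1))) : ℕ :=
  (Finset.univ.filter fun p : Fin (n + 1) × Fin (n + 1) => p.1 < p.2 ∧ w p.2 < w p.1).card

/-! ### Inversions of permutations -/

theorem adjTrans_mul_self (n : ℕ) (i : Fin n) : adjTrans n i * adjTrans n i = 1 :=
  Equiv.swap_mul_self _ _

theorem adjTrans_mul_cancel_left {n : ℕ} (i : Fin n) (w : Equiv.Perm (Fin (n + 1))) :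
    adjTrans n i * (adjTrans n i * w) = w := by
  rw [← mul_assoc, adjTrans_mul_self, one_mul]

theorem adjTrans_lt_iff {n : ℕ} (i : Fin n) (x y : Fin (n + 1))
    (h₁ : ¬(x = i.castSucc ∧ y = i.succ)) (h₂ : ¬(x = i.succ ∧ y = i.castSucc)) :
    adjTrans n i x < adjTrans n i y ↔ x < y := by
  simp only [adjTrans, Equiv.swap_apply_def]
  simp only [Fin.ext_iff, Fin.val_castSucc, Fin.val_succ] at h₁ h₂
  split_ifs <;> simp only [Fin.ext_iff, Fin.lt_def, Fin.val_castSucc, Fin.val_succ] at * <;> omega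

theorem inversions_one (n : ℕ) : inversions n 1 = 0 := by
  simp only [inversions, Finset.card_eq_zero, Finset.filter_eq_empty_iff]
  rintro p - ⟨h₁, h₂⟩
  exact lt_asymm h₁ h₂

theorem inversions_inv {n : ℕ} (w : Equiv.Perm (Fin (n + 1))) :
    inversions n w⁻¹ = inversions n w := by
  refine Finset.card_nbij' (fun p => (w⁻¹ p.2, w⁻¹ p.1)) (fun p => (w p.2, w p.1)) ?_ ?_ ?_ ?_
  · intro p
    simp +contextual
  · intro p
    simp +contextual
  · intro p
    simp
  · intro p
    simp

theorem inversions_adjTrans_mul_of_lt {n : ℕ} (i : Fin n) (w : Equiv.Perm (Fin (n + 1)))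
    (h : w⁻¹ i.castSucc < w⁻¹ i.succ) :
    inversions n (adjTrans n i * w) = inversions n w + 1 := by
  have hs₁ : adjTrans n i i.castSucc = i.succ := Equiv.swap_apply_left _ _
  have hs₂ : adjTrans n i i.succ = i.castSucc := Equiv.swap_apply_right _ _
  have hlt : i.castSucc < i.succ := Fin.castSucc_lt_succ
  unfold inversions
  rw [← Finset.card_insert_of_notMem (a := (w⁻¹ i.castSucc, w⁻¹ i.succ))]
  · congr 1
    ext ⟨x, y⟩
    simp only [Finset.mem_insert, Finset.mem_filter, Finset.mem_univ, true_and, Prod.mk.injEq,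
      Equiv.Perm.eq_inv_iff_eq]
    rw [Equiv.Perm.mul_apply, Equiv.Perm.mul_apply]
    by_cases h₁ : w x = i.castSucc ∧ w y = i.succ
    · have hx : x = w⁻¹ i.castSucc := by rw [← h₁.1]; simp
      have hy : y = w⁻¹ i.succ := by rw [← h₁.2]; simp
      have hxy : x < y := by rwa [hx, hy]
      simp [h₁, hs₁, hs₂, hxy]
    · by_cases h₂ : w x = i.succ ∧ w y = i.castSucc
      · have hx : x = w⁻¹ i.succ := by rw [← h₂.1]; simp
        have hy : y = w⁻¹ i.castSucc := by rw [← h₂.2]; simp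
        have hxy : ¬ x < y := by rw [hx, hy]; exact h.asymm
        simp [hxy, h₁]
      · rw [adjTrans_lt_iff i (w y) (w x) (fun h => h₂ h.symm) (fun h => h₁ h.symm)]
        simp [h₁]
  · simp [hlt.le]

theorem inversions_adjTrans_mul_of_gt {n : ℕ} (i : Fin n) (w : Equiv.Perm (Fin (n + 1)))
    (h : w⁻¹ i.succ < w⁻¹ i.castSucc) :
    inversions n (adjTrans n i * w) + 1 = inversions n w := by
  have key := inversions_adjTrans_mul_of_lt i (adjTrans n i * w) (by
    simpa [mul_inv_rev, adjTrans, Equiv.Perm.mul_apply] using h)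
  rw [adjTrans_mul_cancel_left] at key
  exact key.symm

theorem inv_lt_or_gt {n : ℕ} (i : Fin n) (w : Equiv.Perm (Fin (n + 1))) :
    w⁻¹ i.castSucc < w⁻¹ i.succ ∨ w⁻¹ i.succ < w⁻¹ i.castSucc :=
  lt_or_gt_of_ne fun h => (Fin.castSucc_lt_succ (i := i)).ne (w⁻¹.injective h)

theorem inv_gt_of_inversions_lt {n : ℕ} (i : Fin n) (w : Equiv.Perm (Fin (n + 1)))
    (h : inversions n (adjTrans n i * w) < inversions n w) :
    w⁻¹ i.succ < w⁻¹ i.castSucc := by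
  refine (inv_lt_or_gt i w).resolve_left fun h' => ?_
  rw [inversions_adjTrans_mul_of_lt i w h'] at h
  omega

/-- The permutation represented by a word in the adjacent transpositions. -/
def wordPerm {n : ℕ} (a : List (Fin n)) : Equiv.Perm (Fin (n + 1)) :=
  (a.map (adjTrans n)).prod

theorem wordPerm_cons {n : ℕ} (i : Fin n) (a : List (Fin n)) :
    wordPerm (i :: a) = adjTrans n i * wordPerm a := by
  simp [wordPerm]

theorem wordPerm_append {n : ℕ} (a b : List (Fin n)) :
    wordPerm (a ++ b) = wordPerm a * wordPerm b := by
  simp [wordPerm]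

theorem inversions_wordPerm_le {n : ℕ} (a : List (Fin n)) :
    inversions n (wordPerm a) ≤ a.length := by
  induction a with
  | nil => simp [wordPerm, inversions_one]
  | cons i a ih =>
    rw [wordPerm_cons, List.length_cons]
    rcases inv_lt_or_gt i (wordPerm a) with h | h
    · have := inversions_adjTrans_mul_of_lt i _ h
      omega
    · have := inversions_adjTrans_mul_of_gt i _ h
      omega

/-- A word is reduced if its length is the number of inversions of the permutation it
represents. -/
def IsReducedWord {n : ℕ} (a : List (Fin n)) : Prop :=
  a.length = inversions n (wordPerm a)

theorem IsReducedWord.of_cons {n : ℕ} {i : Fin n} {a : List (Fin n)}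
    (h : IsReducedWord (i :: a)) : IsReducedWord a := by
  have hle := inversions_wordPerm_le a
  rw [IsReducedWord, wordPerm_cons, List.length_cons] at h
  rw [IsReducedWord]
  rcases inv_lt_or_gt i (wordPerm a) with h' | h'
  · have := inversions_adjTrans_mul_of_lt i _ h'
    omega
  · have := inversions_adjTrans_mul_of_gt i _ h'
    omega

theorem IsReducedWord.inv_gt {n : ℕ} {i : Fin n} {a : List (Fin n)}
    (h : IsReducedWord (i :: a)) :
    (wordPerm (i :: a))⁻¹ i.succ < (wordPerm (i :: a))⁻¹ i.castSucc := by
  apply inv_gt_of_inversions_lt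
  have h' := h.of_cons
  rw [IsReducedWord] at h h'
  rw [← h, wordPerm_cons, adjTrans_mul_cancel_left, ← h', List.length_cons]
  exact Nat.lt_succ_self _

/-! ### The longest element -/

theorem inversions_rev_mul {n : ℕ} (w : Equiv.Perm (Fin (n + 1))) :
    inversions n (Fin.revPerm * w) + inversions n w = inversions n Fin.revPerm := by
  have hrev : inversions n Fin.revPerm =
      (Finset.univ.filter fun p : Fin (n + 1) × Fin (n + 1) => p.1 < p.2).card := by
    simp [inversions]
  rw [hrev, ← Finset.card_filter_add_card_filter_not
    (fun p : Fin (n + 1) × Fin (n + 1) => w p.1 < w p.2), Finset.filter_filter,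
    Finset.filter_filter]
  unfold inversions
  congr 2
  · ext p
    simp
  · ext p
    simp only [Finset.mem_filter, Finset.mem_univ, true_and, not_lt]
    refine and_congr_right fun hp => ⟨le_of_lt, fun h => lt_of_le_of_ne h fun h' => ?_⟩
    exact hp.ne' (w.injective h')

theorem inversions_rev (n : ℕ) :
    inversions n Fin.revPerm = ∑ i : Fin (n + 1), (i : ℕ) := by
  simp only [inversions, Fin.revPerm_apply, Fin.rev_lt_rev, and_self, Finset.card_filter,
    Fintype.sum_prod_type_right]
  refine Finset.sum_congr rfl fun y _ => ?_
  rw [← Finset.card_filter, Finset.filter_gt_eq_Iio, Fin.card_Iio]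

theorem inversions_le_rev {n : ℕ} (w : Equiv.Perm (Fin (n + 1))) :
    inversions n w ≤ inversions n Fin.revPerm := by
  have := inversions_rev_mul w
  omega

theorem revPerm_mul_revPerm (n : ℕ) :
    (Fin.revPerm * Fin.revPerm : Equiv.Perm (Fin (n + 1))) = 1 := by
  ext x
  simp

theorem eq_one_of_inversions_eq_zero {n : ℕ}
    (hex : ∀ w : Equiv.Perm (Fin (n + 1)), ∃ a : List (Fin n), wordPerm a = w ∧ IsReducedWord a)
    {w : Equiv.Perm (Fin (n + 1))} (h : inversions n w = 0) : w = 1 := by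
  obtain ⟨a, rfl, ha⟩ := hex w
  rw [IsReducedWord, h, List.length_eq_zero_iff] at ha
  rw [ha, wordPerm, List.map_nil, List.prod_nil]

theorem eq_rev_of_inversions_eq {n : ℕ}
    (hex : ∀ w : Equiv.Perm (Fin (n + 1)), ∃ a : List (Fin n), wordPerm a = w ∧ IsReducedWord a)
    {w : Equiv.Perm (Fin (n + 1))} (h : inversions n w = inversions n Fin.revPerm) :
    w = Fin.revPerm := by
  have h₁ : Fin.revPerm * w = 1 := by
    refine eq_one_of_inversions_eq_zero hex ?_
    have := inversions_rev_mul w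
    omega
  calc w = Fin.revPerm * (Fin.revPerm * w) := by
        rw [← mul_assoc, revPerm_mul_revPerm, one_mul]
    _ = Fin.revPerm := by rw [h₁, mul_one]

/-! ### Words in elements satisfying the nil-Coxeter relations -/

/-- Elements satisfying the braid relations of the symmetric group and squaring to zero. -/
structure IsNilCoxeter {n : ℕ} {M : Type*} [MonoidWithZero M] (E : Fin n → M) : Prop where
  sq : ∀ i, E i * E i = 0
  comm : ∀ i j : Fin n, (i : ℕ) + 1 < j → E i * E j = E j * E i
  braid : ∀ i j : Fin n, (i : ℕ) + 1 = j → E i * E j * E i = E j * E i * E j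

theorem adjTrans_comm {n : ℕ} (i j : Fin n) (h : (i : ℕ) + 1 < j) :
    adjTrans n i * adjTrans n j = adjTrans n j * adjTrans n i := by
  have h₁ := i.isLt
  have h₂ := j.isLt
  ext x
  simp only [adjTrans, Equiv.Perm.mul_apply, Equiv.swap_apply_def]
  split_ifs <;> simp only [Fin.ext_iff, Fin.val_castSucc, Fin.val_succ] at * <;> omega

theorem adjTrans_braid {n : ℕ} (i j : Fin n) (h : (i : ℕ) + 1 = j) :
    adjTrans n i * adjTrans n j * adjTrans n i =
      adjTrans n j * adjTrans n i * adjTrans n j := by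
  have hij : i.succ = j.castSucc := Fin.ext (by simpa using h)
  have h₁ : i.castSucc ≠ j.castSucc := by simp [Fin.ext_iff]; omega
  have h₂ : i.castSucc ≠ j.succ := by simp [Fin.ext_iff]; omega
  have h₃ : j.castSucc ≠ j.succ := by simp [Fin.ext_iff]
  have key₁ := Equiv.swap_mul_swap_mul_swap h₃.symm h₂.symm
  have key₂ := Equiv.swap_mul_swap_mul_swap h₁ h₂
  rw [Equiv.swap_comm j.castSucc i.castSucc, Equiv.swap_comm j.succ j.castSucc] at key₁
  simp only [adjTrans, hij]
  rw [key₁, key₂, Equiv.swap_comm]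

namespace IsNilCoxeter

variable {n : ℕ} {M : Type*} [MonoidWithZero M] {E : Fin n → M}

theorem exists_common_of_braid (hE : IsNilCoxeter E)
    (hex : ∀ w : Equiv.Perm (Fin (n + 1)), ∃ a : List (Fin n), wordPerm a = w ∧ IsReducedWord a)
    (w : Equiv.Perm (Fin (n + 1))) (i j : Fin n) (hij : i < j)
    (hi : w⁻¹ i.succ < w⁻¹ i.castSucc) (hj : w⁻¹ j.succ < w⁻¹ j.castSucc) :
    ∃ a b : List (Fin n), wordPerm (i :: a) = w ∧ wordPerm (j :: b) = w ∧
      IsReducedWord (i :: a) ∧ IsReducedWord (j :: b) ∧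
      ((i :: a).map E).prod = ((j :: b).map E).prod := by
  have hi' := inversions_adjTrans_mul_of_gt i w hi
  have hj' := inversions_adjTrans_mul_of_gt j w hj
  rcases Nat.lt_or_ge ((i : ℕ) + 1) j with h | h
  · obtain ⟨c, hc, hred⟩ := hex (adjTrans n j * (adjTrans n i * w))
    have hji := inversions_adjTrans_mul_of_gt j (adjTrans n i * w) (by
      have h₁ : j.castSucc ≠ i.castSucc := by simp [Fin.ext_iff]; omega
      have h₂ : j.castSucc ≠ i.succ := by simp [Fin.ext_iff]; omega
      have h₃ : j.succ ≠ i.castSucc := by simp [Fin.ext_iff]; omega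
      have h₄ : j.succ ≠ i.succ := by simp [Fin.ext_iff]; omega
      simpa [mul_inv_rev, Equiv.Perm.mul_apply, adjTrans,
        Equiv.swap_apply_of_ne_of_ne, h₁, h₂, h₃, h₄] using hj)
    have e₁ : wordPerm (i :: j :: c) = w := by
      rw [wordPerm_cons, wordPerm_cons, hc, adjTrans_mul_cancel_left, adjTrans_mul_cancel_left]
    have e₂ : wordPerm (j :: i :: c) = w := by
      rw [wordPerm_cons, wordPerm_cons, ← mul_assoc, ← adjTrans_comm i j h, mul_assoc,
        ← wordPerm_cons, ← wordPerm_cons, e₁]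
    rw [IsReducedWord, hc] at hred
    refine ⟨j :: c, i :: c, e₁, e₂, ?_, ?_, ?_⟩
    · rw [IsReducedWord, e₁]
      simp only [List.length_cons]
      omega
    · rw [IsReducedWord, e₂]
      simp only [List.length_cons]
      omega
    · simp only [List.map_cons, List.prod_cons]
      rw [← mul_assoc, hE.comm i j h, mul_assoc]
  · have h : (i : ℕ) + 1 = j := le_antisymm hij h
    have hs : i.succ = j.castSucc := Fin.ext (by simpa using h)
    have h₁ : i.castSucc ≠ j.castSucc := by simp [Fin.ext_iff]; omega
    have h₂ : i.castSucc ≠ j.succ := by simp [Fin.ext_iff]; omega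
    have h₃ : j.castSucc ≠ j.succ := by simp [Fin.ext_iff]
    obtain ⟨c, hc, hred⟩ := hex (adjTrans n i * (adjTrans n j * (adjTrans n i * w)))
    have hji := inversions_adjTrans_mul_of_gt j (adjTrans n i * w) (by
      rw [hs] at hi
      simpa [mul_inv_rev, Equiv.Perm.mul_apply, adjTrans, hs,
        Equiv.swap_apply_of_ne_of_ne, h₂.symm, h₃.symm] using hj.trans hi)
    have hiji := inversions_adjTrans_mul_of_gt i (adjTrans n j * (adjTrans n i * w)) (by
      simpa [mul_inv_rev, Equiv.Perm.mul_apply, adjTrans, hs,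
        Equiv.swap_apply_of_ne_of_ne, h₁, h₂, h₂.symm, h₃.symm] using hj)
    have e₁ : wordPerm (i :: j :: i :: c) = w := by
      rw [wordPerm_cons, wordPerm_cons, wordPerm_cons, hc, adjTrans_mul_cancel_left,
        adjTrans_mul_cancel_left, adjTrans_mul_cancel_left]
    have e₂ : wordPerm (j :: i :: j :: c) = w := by
      rw [← e₁]
      simp only [wordPerm_cons, ← mul_assoc]
      rw [adjTrans_braid i j h]
    rw [IsReducedWord, hc] at hred
    refine ⟨j :: i :: c, i :: j :: c, e₁, e₂, ?_, ?_, ?_⟩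
    · rw [IsReducedWord, e₁]
      simp only [List.length_cons]
      omega
    · rw [IsReducedWord, e₂]
      simp only [List.length_cons]
      omega
    · simp only [List.map_cons, List.prod_cons, ← mul_assoc]
      rw [hE.braid i j h]

/-- Two reduced words of the same permutation have the same product. -/
theorem prod_eq_of_isReducedWord (hE : IsNilCoxeter E)
    (hex : ∀ w : Equiv.Perm (Fin (n + 1)), ∃ a : List (Fin n), wordPerm a = w ∧ IsReducedWord a)
    (a b : List (Fin n)) (ha : IsReducedWord a) (hb : IsReducedWord b)
    (hab : wordPerm a = wordPerm b) : (a.map E).prod = (b.map E).prod := by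
  induction hk : a.length generalizing a b with
  | zero =>
    have hlen : b.length = 0 := by rw [hb, ← hab, ← ha, hk]
    rw [List.length_eq_zero_iff] at hk hlen
    rw [hk, hlen]
  | succ k ih =>
    have hlen : b.length = k + 1 := by rw [hb, ← hab, ← ha, hk]
    obtain ⟨i, a, rfl⟩ := List.exists_cons_of_length_eq_add_one hk
    obtain ⟨j, b, rfl⟩ := List.exists_cons_of_length_eq_add_one hlen
    have cons_eq : ∀ (i : Fin n) (a c : List (Fin n)), IsReducedWord (i :: a) →
        (i :: a).length = k + 1 → IsReducedWord (i :: c) →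
        wordPerm (i :: a) = wordPerm (i :: c) →
        ((i :: a).map E).prod = ((i :: c).map E).prod := by
      intro i a c ha hk hc hac
      rw [wordPerm_cons, wordPerm_cons, mul_right_inj] at hac
      simp only [List.map_cons, List.prod_cons]
      rw [ih a c ha.of_cons hc.of_cons hac (by simpa using hk)]
    rcases lt_trichotomy i j with hij | rfl | hij
    · obtain ⟨c, d, hc, hd, hrc, hrd, hcd⟩ := hE.exists_common_of_braid hex
        (wordPerm (i :: a)) i j hij ha.inv_gt (hab ▸ hb.inv_gt)
      rw [cons_eq i a c ha hk hrc hc.symm, hcd,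
        cons_eq j b d hb hlen hrd (hab.symm.trans hd.symm)]
    · exact cons_eq i a b ha hk hb hab
    · obtain ⟨c, d, hc, hd, hrc, hrd, hcd⟩ := hE.exists_common_of_braid hex
        (wordPerm (i :: a)) j i hij (hab ▸ hb.inv_gt) ha.inv_gt
      rw [cons_eq i a d ha hk hrd hd.symm, ← hcd,
        cons_eq j b c hb hlen hrc (hab.symm.trans hc.symm)]

/-- The product along a word that is not reduced vanishes. -/
theorem prod_eq_zero (hE : IsNilCoxeter E)
    (hex : ∀ w : Equiv.Perm (Fin (n + 1)), ∃ a : List (Fin n), wordPerm a = w ∧ IsReducedWord a)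
    (a : List (Fin n)) (ha : ¬ IsReducedWord a) : (a.map E).prod = 0 := by
  induction a with
  | nil => exact absurd (by simp [IsReducedWord, wordPerm, inversions_one]) ha
  | cons i a ih =>
    rw [List.map_cons, List.prod_cons]
    by_cases hred : IsReducedWord a
    · have hgt : (wordPerm a)⁻¹ i.succ < (wordPerm a)⁻¹ i.castSucc := by
        refine (inv_lt_or_gt i (wordPerm a)).resolve_left fun h => ha ?_
        rw [IsReducedWord, wordPerm_cons, inversions_adjTrans_mul_of_lt i _ h, List.length_cons,
          hred]
      have hinv := inversions_adjTrans_mul_of_gt i _ hgt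
      obtain ⟨c, hc, hcred⟩ := hex (adjTrans n i * wordPerm a)
      have hperm : wordPerm a = wordPerm (i :: c) := by
        rw [wordPerm_cons, hc, adjTrans_mul_cancel_left]
      have hcons : IsReducedWord (i :: c) := by
        rw [IsReducedWord, ← hperm, ← hinv, ← hc, ← hcred, List.length_cons]
      rw [hE.prod_eq_of_isReducedWord hex a (i :: c) hred hcons hperm, List.map_cons,
        List.prod_cons, ← mul_assoc, hE.sq, zero_mul]
    · rw [ih hred, mul_zero]

end IsNilCoxeter

/-! ### Demazure operators -/

section Demazure

variable {n : ℕ}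
  {D : Fin n → MvPolynomial (Fin (n + 1)) ℤ →ₗ[ℤ] MvPolynomial (Fin (n + 1)) ℤ}

theorem X_sub_X_mul_cancel {σ : Type*} {i j : σ} (h : i ≠ j) {P Q : MvPolynomial σ ℤ}
    (hPQ : (X i - X j) * P = (X i - X j) * Q) : P = Q :=
  mul_left_cancel₀ (sub_ne_zero.mpr fun h' => h (X_injective h')) hPQ

/-- Operators satisfying the defining equations of the Demazure operators. -/
def IsDemazure (D : Fin n → MvPolynomial (Fin (n + 1)) ℤ →ₗ[ℤ] MvPolynomial (Fin (n + 1)) ℤ) :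
    Prop :=
  ∀ (i : Fin n) (P : MvPolynomial (Fin (n + 1)) ℤ),
    (X i.succ - X i.castSucc) * D i P = P - rename (Equiv.swap i.castSucc i.succ) P

namespace IsDemazure

theorem rename_apply (hD : IsDemazure D) (i : Fin n) (σ : Equiv.Perm (Fin (n + 1)))
    (P : MvPolynomial (Fin (n + 1)) ℤ) :
    (X (σ i.succ) - X (σ i.castSucc)) * rename σ (D i P) =
      rename σ P - rename (σ * Equiv.swap i.castSucc i.succ) P := by
  have h := congrArg (rename σ) (hD i P)
  simpa [rename_rename, Equiv.Perm.coe_mul] using h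

theorem mul_of_rename_eq (hD : IsDemazure D) (i : Fin n) (c P : MvPolynomial (Fin (n + 1)) ℤ)
    (hc : rename (Equiv.swap i.castSucc i.succ) c = c) : D i (c * P) = c * D i P := by
  apply X_sub_X_mul_cancel (Fin.castSucc_lt_succ (i := i)).ne'
  rw [hD, map_mul, hc]
  linear_combination -c * hD i P

theorem rename_eq_iff (hD : IsDemazure D) (i : Fin n) (P : MvPolynomial (Fin (n + 1)) ℤ) :
    rename (Equiv.swap i.castSucc i.succ) P = P ↔ D i P = 0 := by
  constructor
  · intro h
    apply X_sub_X_mul_cancel (Fin.castSucc_lt_succ (i := i)).ne'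
    rw [hD, h, sub_self, mul_zero]
  · intro h
    have := hD i P
    rw [h, mul_zero] at this
    exact (sub_eq_zero.mp this.symm).symm

/-- The Demazure operators are linear over the symmetric polynomials. -/
noncomputable def toSymmEnd (hD : IsDemazure D) (i : Fin n) :
    Module.End (symmetricSubalgebra (Fin (n + 1)) ℤ) (MvPolynomial (Fin (n + 1)) ℤ) where
  toFun := D i
  map_add' := map_add (D i)
  map_smul' c P := hD.mul_of_rename_eq i c P (c.2 _)

theorem toSymmEnd_apply (hD : IsDemazure D) (i : Fin n) (P : MvPolynomial (Fin (n + 1)) ℤ) :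
    hD.toSymmEnd i P = D i P := rfl

theorem prod_toSymmEnd_apply (hD : IsDemazure D) (a : List (Fin n))
    (P : MvPolynomial (Fin (n + 1)) ℤ) :
    (a.map hD.toSymmEnd).prod P = a.foldr (fun i P => D i P) P := by
  induction a with
  | nil => rfl
  | cons i a ih => rw [List.map_cons, List.prod_cons, Module.End.mul_apply, ih]; rfl

theorem apply_apply (hD : IsDemazure D) (i : Fin n) (P : MvPolynomial (Fin (n + 1)) ℤ) :
    D i (D i P) = 0 := by
  rw [← hD.rename_eq_iff]
  apply X_sub_X_mul_cancel (Fin.castSucc_lt_succ (i := i)).ne'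
  have h := hD.rename_apply i (Equiv.swap i.castSucc i.succ) P
  simp only [Equiv.swap_mul_self, Equiv.swap_apply_left, Equiv.swap_apply_right,
    Equiv.Perm.coe_one, rename_id_apply] at h
  linear_combination -h - hD i P

theorem apply_comm (hD : IsDemazure D) (i j : Fin n) (h : (i : ℕ) + 1 < j)
    (P : MvPolynomial (Fin (n + 1)) ℤ) : D i (D j P) = D j (D i P) := by
  have h₁ : j.castSucc ≠ i.castSucc := by simp [Fin.ext_iff]; omega
  have h₂ : j.castSucc ≠ i.succ := by simp [Fin.ext_iff]; omega
  have h₃ : j.succ ≠ i.castSucc := by simp [Fin.ext_iff]; omega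
  have h₄ : j.succ ≠ i.succ := by simp [Fin.ext_iff]; omega
  apply X_sub_X_mul_cancel (Fin.castSucc_lt_succ (i := i)).ne'
  apply X_sub_X_mul_cancel (Fin.castSucc_lt_succ (i := j)).ne'
  have e₁ := hD i (D j P)
  have e₂ := hD j (D i P)
  have e₃ := hD.rename_apply j (Equiv.swap i.castSucc i.succ) P
  have e₄ := hD.rename_apply i (Equiv.swap j.castSucc j.succ) P
  have hcomm := adjTrans_comm i j h
  simp only [adjTrans] at hcomm
  rw [← hcomm] at e₄
  simp only [Equiv.swap_apply_of_ne_of_ne h₁ h₂, Equiv.swap_apply_of_ne_of_ne h₃ h₄,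
    Equiv.swap_apply_of_ne_of_ne h₁.symm h₃.symm,
    Equiv.swap_apply_of_ne_of_ne h₂.symm h₄.symm] at e₃ e₄
  linear_combination (X j.succ - X j.castSucc) * e₁ - (X i.succ - X i.castSucc) * e₂ +
    hD j P - hD i P - e₃ + e₄

theorem apply_braid (hD : IsDemazure D) (i j : Fin n) (h : (i : ℕ) + 1 = j)
    (P : MvPolynomial (Fin (n + 1)) ℤ) : D i (D j (D i P)) = D j (D i (D j P)) := by
  have hs : i.succ = j.castSucc := Fin.ext (by simpa using h)
  have h₁ : i.castSucc ≠ j.castSucc := by simp [Fin.ext_iff]; omega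
  have h₂ : i.castSucc ≠ j.succ := by simp [Fin.ext_iff]; omega
  have h₃ : j.castSucc ≠ j.succ := by simp [Fin.ext_iff]
  have hbraid := adjTrans_braid i j h
  simp only [adjTrans, hs] at hbraid
  apply X_sub_X_mul_cancel h₁.symm
  apply X_sub_X_mul_cancel h₃.symm
  apply X_sub_X_mul_cancel h₂.symm
  have i₁ := hD i P
  have i₂ := hD i (D j P)
  have i₃ := hD i (D j (D i P))
  have i₄ := hD.rename_apply i (Equiv.swap j.castSucc j.succ) P
  have i₅ := hD.rename_apply i (Equiv.swap j.castSucc j.succ) (D j P)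
  have i₆ := hD.rename_apply i
    (Equiv.swap i.castSucc j.castSucc * Equiv.swap j.castSucc j.succ) P
  have i₇ := (hD.rename_eq_iff i (D i P)).mpr (hD.apply_apply i P)
  have j₁ := hD j P
  have j₂ := hD j (D i P)
  have j₃ := hD j (D i (D j P))
  have j₄ := hD.rename_apply j (Equiv.swap i.castSucc j.castSucc) P
  have j₅ := hD.rename_apply j (Equiv.swap i.castSucc j.castSucc) (D i P)
  have j₆ := hD.rename_apply j
    (Equiv.swap j.castSucc j.succ * Equiv.swap i.castSucc j.castSucc) P
  have j₇ := (hD.rename_eq_iff j (D j P)).mpr (hD.apply_apply j P)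
  simp only [hs, Equiv.Perm.mul_apply, Equiv.swap_apply_left,
    Equiv.swap_apply_right, Equiv.swap_apply_of_ne_of_ne h₁ h₂,
    Equiv.swap_apply_of_ne_of_ne h₂.symm h₃.symm, hbraid] at i₁ i₂ i₃ i₄ i₅ i₆ i₇ j₄ j₅ j₆
  linear_combination
    (X j.succ - X j.castSucc) * (X j.succ - X i.castSucc) * i₃ + (X j.succ - X i.castSucc) * j₂
      - (X j.succ - X j.castSucc) * j₅ - (X j.succ - X j.castSucc) * i₇ + i₁ - i₄ + i₆
      - ((X j.castSucc - X i.castSucc) * (X j.succ - X i.castSucc) * j₃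
        + (X j.succ - X i.castSucc) * i₂
        - (X j.castSucc - X i.castSucc) * i₅ - (X j.castSucc - X i.castSucc) * j₇
        + j₁ - j₄ + j₆)

theorem isNilCoxeter (hD : IsDemazure D) : IsNilCoxeter hD.toSymmEnd where
  sq i := LinearMap.ext fun P => hD.apply_apply i P
  comm i j h := LinearMap.ext fun P => hD.apply_comm i j h P
  braid i j h := LinearMap.ext fun P => hD.apply_braid i j h P

/-- A polynomial killed by all Demazure operators is symmetric. -/
theorem isSymmetric_of_apply_eq_zero (hD : IsDemazure D)
    (hex : ∀ w : Equiv.Perm (Fin (n + 1)), ∃ a : List (Fin n), wordPerm a = w ∧ IsReducedWord a)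
    (P : MvPolynomial (Fin (n + 1)) ℤ) (hP : ∀ i, D i P = 0) : P.IsSymmetric := by
  intro w
  obtain ⟨a, rfl, -⟩ := hex w
  induction a with
  | nil => simp [wordPerm]
  | cons i a ih =>
    rw [wordPerm_cons, Equiv.Perm.coe_mul, ← rename_rename, ih]
    exact (hD.rename_eq_iff i P).mpr (hP i)

/-! ### The staircase monomial -/

theorem apply_monomial (hD : IsDemazure D) (i : Fin n) (e : Fin (n + 1) → ℕ)
    (he : e i.succ = e i.castSucc + 1) :
    D i (∏ j, X j ^ e j) = ∏ j, X j ^ Function.update e i.succ (e i.castSucc) j := by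
  have hne : i.castSucc ≠ i.succ := (Fin.castSucc_lt_succ (i := i)).ne
  set e' := Function.update e i.succ (e i.castSucc) with he'
  have hsymm : rename (Equiv.swap i.castSucc i.succ) (∏ j, (X j : MvPolynomial _ ℤ) ^ e' j) =
      ∏ j, X j ^ e' j := by
    simp only [map_prod, map_pow, rename_X]
    rw [← Equiv.prod_comp (Equiv.swap i.castSucc i.succ) (fun j => (X j : MvPolynomial _ ℤ) ^ e' j)]
    refine Finset.prod_congr rfl fun j _ => ?_
    congr 1
    rw [Equiv.swap_apply_def]
    split_ifs with h₁ h₂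
    · simp [he', h₁, hne]
    · simp [he', h₂, hne]
    · rfl
  have hmul : (∏ j, (X j : MvPolynomial (Fin (n + 1)) ℤ) ^ e j) =
      (∏ j, X j ^ e' j) * X i.succ := by
    rw [← Finset.mul_prod_erase _ _ (Finset.mem_univ i.succ),
      ← Finset.mul_prod_erase _ (fun j => X j ^ e' j) (Finset.mem_univ i.succ)]
    have : ∏ j ∈ Finset.univ.erase i.succ, (X j : MvPolynomial (Fin (n + 1)) ℤ) ^ e j =
        ∏ j ∈ Finset.univ.erase i.succ, X j ^ e' j := by
      refine Finset.prod_congr rfl fun j hj => ?_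
      rw [he', Function.update_of_ne (Finset.ne_of_mem_erase hj)]
    rw [this, he, he', Function.update_self, pow_succ]
    ring
  apply X_sub_X_mul_cancel hne.symm
  rw [hD, hmul, map_mul, hsymm, rename_X, Equiv.swap_apply_right]
  ring

/-- A monomial whose exponents start at zero and increase by at most one at each step is reduced
to `1` by a word of Demazure operators of length the degree. -/
theorem exists_word_monomial (hD : IsDemazure D) (e : Fin (n + 1) → ℕ) (h₀ : e 0 = 0)
    (he : ∀ i : Fin n, e i.succ ≤ e i.castSucc + 1) :
    ∃ a : List (Fin n), a.length = ∑ j, e j ∧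
      (a.map hD.toSymmEnd).prod (∏ j, X j ^ e j) = 1 := by
  induction hk : ∑ j, e j generalizing e with
  | zero =>
    have hz : ∀ j, e j = 0 := by simpa using hk
    exact ⟨[], rfl, by simp [hz]⟩
  | succ k ih =>
    have hne : (Finset.univ.filter fun i : Fin n => e i.succ = e i.castSucc + 1).Nonempty := by
      by_contra hempty
      rw [Finset.not_nonempty_iff_eq_empty, Finset.filter_eq_empty_iff] at hempty
      have hz : ∀ j, e j = 0 := by
        intro j
        induction j using Fin.induction with
        | zero => exact h₀
        | succ i hi =>
          have := he i
          have := hempty (Finset.mem_univ i)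
          omega
      simp [hz] at hk
    obtain ⟨i, hi, hmax⟩ := Finset.exists_max_image _ id hne
    have hi : e i.succ = e i.castSucc + 1 := (Finset.mem_filter.mp hi).2
    have hsum : ∑ j, Function.update e i.succ (e i.castSucc) j = k := by
      rw [Finset.sum_update_of_mem (Finset.mem_univ _)]
      rw [← Finset.add_sum_erase _ _ (Finset.mem_univ i.succ), Finset.erase_eq] at hk
      omega
    obtain ⟨a, ha, hprod⟩ := ih (Function.update e i.succ (e i.castSucc))
      (by rw [Function.update_of_ne (Fin.succ_ne_zero i).symm, h₀]) (by
        intro j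
        rcases eq_or_ne j i with rfl | hji
        · simp [(Fin.castSucc_lt_succ (i := j)).ne]
        · rw [Function.update_of_ne (fun h => hji (Fin.succ_injective _ h))]
          by_cases hj : j.castSucc = i.succ
          · rw [hj, Function.update_self, ← hi, ← hj]
            have hlt : i < j := by
              rw [Fin.ext_iff, Fin.val_castSucc, Fin.val_succ] at hj
              rw [Fin.lt_def]
              omega
            have hnot : e j.succ ≠ e j.castSucc + 1 := fun h =>
              hlt.not_ge (hmax j (Finset.mem_filter.mpr ⟨Finset.mem_univ _, h⟩))
            have := he j
            omega
          · rw [Function.update_of_ne hj]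
            exact he j) hsum
    refine ⟨a ++ [i], by simp [ha], ?_⟩
    rw [List.map_append, List.prod_append, Module.End.mul_apply, List.map_singleton,
      List.prod_singleton, hD.toSymmEnd_apply, hD.apply_monomial i e hi, hprod]

/-- The product of a reduced word of the longest element sends the staircase monomial to `1`. -/
theorem prod_staircase (hD : IsDemazure D)
    (hex : ∀ w : Equiv.Perm (Fin (n + 1)), ∃ a : List (Fin n), wordPerm a = w ∧ IsReducedWord a)
    (a : List (Fin n)) (ha : inversions n Fin.revPerm ≤ a.length) :
    (a.map hD.toSymmEnd).prod (∏ j : Fin (n + 1), X j ^ (j : ℕ)) =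
      if wordPerm a = Fin.revPerm ∧ a.length = inversions n Fin.revPerm then 1 else 0 := by
  obtain ⟨b, hlen, hb⟩ := hD.exists_word_monomial (fun j => (j : ℕ)) rfl (by simp)
  have hbred : IsReducedWord b := by
    by_contra h
    rw [hD.isNilCoxeter.prod_eq_zero hex b h, LinearMap.zero_apply] at hb
    exact zero_ne_one hb
  rw [← inversions_rev] at hlen
  have hbrev : wordPerm b = Fin.revPerm := eq_rev_of_inversions_eq hex (by rw [← hbred, hlen])
  split_ifs with h
  · rw [hD.isNilCoxeter.prod_eq_of_isReducedWord hex a b (by rw [IsReducedWord, h.1, h.2]) hbred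
      (h.1.trans hbrev.symm), hb]
  · rw [hD.isNilCoxeter.prod_eq_zero hex a fun hred => h ?_, LinearMap.zero_apply]
    have hle := inversions_le_rev (wordPerm a)
    rw [IsReducedWord] at hred
    exact ⟨eq_rev_of_inversions_eq hex (by omega), by omega⟩

section ChosenWords

variable {l : Equiv.Perm (Fin (n + 1)) → List (Fin n)}

theorem pairing (hD : IsDemazure D) (hl : ∀ w, wordPerm (l w) = w ∧ IsReducedWord (l w))
    (v u : Equiv.Perm (Fin (n + 1)))
    (h : inversions n Fin.revPerm ≤ inversions n v + inversions n u) :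
    ((l v).map hD.toSymmEnd).prod (((l u).map hD.toSymmEnd).prod
      (∏ j : Fin (n + 1), X j ^ (j : ℕ))) = if v * u = Fin.revPerm then 1 else 0 := by
  have hlen : ∀ w, (l w).length = inversions n w := fun w => by
    rw [(hl w).2, (hl w).1]
  rw [← Module.End.mul_apply, ← List.prod_append, ← List.map_append,
    hD.prod_staircase (fun w => ⟨l w, hl w⟩) _ (by rw [List.length_append, hlen, hlen]; exact h),
    wordPerm_append, (hl v).1, (hl u).1, List.length_append, hlen, hlen]
  refine if_congr (and_iff_left_of_imp fun hvu => ?_) rfl rfl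
  rw [← inversions_rev_mul u⁻¹, inversions_inv, ← hvu, mul_inv_cancel_right]

theorem linearIndependent (hD : IsDemazure D)
    (hl : ∀ w, wordPerm (l w) = w ∧ IsReducedWord (l w)) :
    LinearIndependent (symmetricSubalgebra (Fin (n + 1)) ℤ)
      (fun w => ((l w).map hD.toSymmEnd).prod (∏ j : Fin (n + 1), X j ^ (j : ℕ))) := by
  rw [Fintype.linearIndependent_iff]
  intro g hg w
  induction hk : inversions n w using Nat.strong_induction_on generalizing w with
  | _ k ih =>
    have h := congrArg ((l (Fin.revPerm * w⁻¹)).map hD.toSymmEnd).prod hg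
    rw [map_sum, map_zero, Finset.sum_eq_single w] at h
    · rw [map_smul, hD.pairing hl, if_pos (inv_mul_cancel_right _ _), Subalgebra.smul_def,
        smul_eq_mul, mul_one] at h
      · exact Subtype.ext h
      · rw [← inversions_inv w, inversions_rev_mul]
    · intro u _ hu
      rw [map_smul]
      rcases lt_or_ge (inversions n u) k with hlt | hge
      · rw [ih _ hlt u rfl, zero_smul]
      · rw [hD.pairing hl, if_neg, smul_zero]
        · intro heq
          apply hu
          rw [mul_assoc] at heq
          exact (inv_mul_eq_one.mp (mul_eq_left.mp heq)).symm
        · have := inversions_rev_mul w⁻¹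
          rw [inversions_inv] at this
          omega
    · exact fun h => absurd (Finset.mem_univ w) h

theorem toSymmEnd_apply_prod_eq_zero (hD : IsDemazure D)
    (hl : ∀ w, wordPerm (l w) = w ∧ IsReducedWord (l w)) (P : MvPolynomial (Fin (n + 1)) ℤ)
    (v : Equiv.Perm (Fin (n + 1)))
    (hP : ∀ w, inversions n v < inversions n w → ((l w).map hD.toSymmEnd).prod P = 0)
    (i : Fin n) : D i (((l v).map hD.toSymmEnd).prod P) = 0 := by
  rw [← hD.toSymmEnd_apply, ← Module.End.mul_apply, ← List.prod_cons, ← List.map_cons]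
  have hex : ∀ w, ∃ a : List (Fin n), wordPerm a = w ∧ IsReducedWord a := fun w => ⟨l w, hl w⟩
  by_cases hred : IsReducedWord (i :: l v)
  · rw [hD.isNilCoxeter.prod_eq_of_isReducedWord hex _ (l (wordPerm (i :: l v))) hred (hl _).2
      (hl _).1.symm]
    apply hP
    have hv := (hl v).2
    rw [IsReducedWord, (hl v).1] at hv
    rw [← hred, List.length_cons, hv]
    exact Nat.lt_succ_self _
  · rw [hD.isNilCoxeter.prod_eq_zero hex _ hred, LinearMap.zero_apply]

theorem mem_span (hD : IsDemazure D) (hl : ∀ w, wordPerm (l w) = w ∧ IsReducedWord (l w))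
    (k : ℕ) (P : MvPolynomial (Fin (n + 1)) ℤ)
    (hP : ∀ w, k ≤ inversions n w → ((l w).map hD.toSymmEnd).prod P = 0) :
    P ∈ Submodule.span (symmetricSubalgebra (Fin (n + 1)) ℤ)
      (Set.range fun w => ((l w).map hD.toSymmEnd).prod
        (∏ j : Fin (n + 1), X j ^ (j : ℕ))) := by
  classical
  have hex : ∀ w, ∃ a : List (Fin n), wordPerm a = w ∧ IsReducedWord a := fun w => ⟨l w, hl w⟩
  induction k generalizing P with
  | zero =>
    have h := hP 1 (Nat.zero_le _)
    rw [hD.isNilCoxeter.prod_eq_of_isReducedWord hex (l 1) [] (hl 1).2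
      (by simp [IsReducedWord, wordPerm, inversions_one]) ((hl 1).1.trans (by simp [wordPerm]))] at h
    rw [List.map_nil, List.prod_nil, Module.End.one_apply] at h
    rw [h]
    exact zero_mem _
  | succ k ih =>
    have hsymm : ∀ v, inversions n v = k →
        ((l v).map hD.toSymmEnd).prod P ∈ symmetricSubalgebra (Fin (n + 1)) ℤ := fun v hv =>
      hD.isSymmetric_of_apply_eq_zero hex _
        (hD.toSymmEnd_apply_prod_eq_zero hl P v fun w hw => hP w (by omega))
    set c : Equiv.Perm (Fin (n + 1)) → symmetricSubalgebra (Fin (n + 1)) ℤ := fun v =>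
      if hv : inversions n v = k then ⟨_, hsymm v hv⟩ else 0 with hc
    set R := ∑ v, c v • ((l (v⁻¹ * Fin.revPerm)).map hD.toSymmEnd).prod
      (∏ j : Fin (n + 1), (X j : MvPolynomial _ ℤ) ^ (j : ℕ)) with hR
    have hinv : ∀ v : Equiv.Perm (Fin (n + 1)),
        inversions n v + inversions n (v⁻¹ * Fin.revPerm) = inversions n Fin.revPerm := by
      intro v
      rw [← inversions_inv (v⁻¹ * _), mul_inv_rev, inv_inv,
        inv_eq_of_mul_eq_one_right (revPerm_mul_revPerm n), add_comm, inversions_rev_mul]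
    rw [← sub_add_cancel P R]
    refine add_mem (ih _ fun w hw => ?_) (sum_mem fun v _ =>
      Submodule.smul_mem _ _ (Submodule.subset_span ⟨_, rfl⟩))
    rw [map_sub, hR, map_sum, Finset.sum_eq_single w]
    · rw [map_smul, hD.pairing hl _ _ (hinv w).ge, if_pos (mul_inv_cancel_left _ _),
        Subalgebra.smul_def, smul_eq_mul, mul_one, sub_eq_zero]
      by_cases hwk : inversions n w = k
      · simp [hc, hwk]
      · simp [hc, hwk, hP w (by omega)]
    · intro v _ hv
      rw [map_smul]
      by_cases hvk : inversions n v = k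
      · rw [hD.pairing hl, if_neg, smul_zero]
        · intro heq
          apply hv
          rw [← mul_assoc] at heq
          exact (mul_inv_eq_one.mp (mul_eq_right.mp heq)).symm
        · have := hinv v
          omega
      · simp [hc, hvk]
    · exact fun h => absurd (Finset.mem_univ w) h

end ChosenWords

end IsDemazure

end Demazure

/-- Choosing for each `w ∈ S_{n+1}` a reduced expression `w = s_{i_1} ⋯ s_{i_r}`
(`r = r(w)` the number of inversions) and letting `∂_w = ∂_{i_1} ∘ ⋯ ∘ ∂_{i_r}` be the
corresponding composite of Demazure operators, the family `(∂_w(X_2 X_3² ⋯ X_{n+1}^n))_w`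
is a basis of `ℤ[X_1, …, X_{n+1}]` as a module over the subring of symmetric polynomials. -/
theorem demazure_staircase_basis (n : ℕ)
    (D : Fin n → MvPolynomial (Fin (n + 1)) ℤ →ₗ[ℤ] MvPolynomial (Fin (n + 1)) ℤ)
    (hD : ∀ (i : Fin n) (P : MvPolynomial (Fin (n + 1)) ℤ),
      (X i.succ - X i.castSucc) * D i P =
        P - rename (Equiv.swap i.castSucc i.succ) P)
    (l : Equiv.Perm (Fin (n + 1)) → List (Fin n))
    (hred : ∀ w, ((l w).map (adjTrans n)).prod = w ∧ (l w).length = inversions n w) :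
    LinearIndependent (symmetricSubalgebra (Fin (n + 1)) ℤ)
      (fun w : Equiv.Perm (Fin (n + 1)) =>
        (l w).foldr (fun i P => D i P) (∏ i : Fin (n + 1), X i ^ (i : ℕ))) ∧
    Submodule.span (symmetricSubalgebra (Fin (n + 1)) ℤ)
      (Set.range fun w : Equiv.Perm (Fin (n + 1)) =>
        (l w).foldr (fun i P => D i P) (∏ i : Fin (n + 1), X i ^ (i : ℕ))) = ⊤ := by
  have hD' : IsDemazure D := hD
  have hl : ∀ w, wordPerm (l w) = w ∧ IsReducedWord (l w) := fun w =>
    ⟨(hred w).1, by rw [IsReducedWord, (hred w).2]; exact congrArg _ (hred w).1.symm⟩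
  have hfun : (fun w => (l w).foldr (fun i P => D i P) (∏ i : Fin (n + 1), X i ^ (i : ℕ))) =
      fun w => ((l w).map hD'.toSymmEnd).prod (∏ i : Fin (n + 1), X i ^ (i : ℕ)) :=
    funext fun w => (hD'.prod_toSymmEnd_apply _ _).symm
  rw [hfun]
  refine ⟨hD'.linearIndependent hl, Submodule.eq_top_iff'.mpr fun P =>
    hD'.mem_span hl (inversions n Fin.revPerm + 1) P fun w hw => ?_⟩
  have := inversions_le_rev w
  omega
end

section
/- Let n ≥ 1 and P_n = ℤ[X_1,…,X_n]. For each w ∈ S_n fix a reduced expression and let ∂_w be the corresponding composite of Demazure operators. Then for every endomorphism φ of P_n that is linear over the subring P_n^{S_n} of symmetric polynomials, there exists a unique family (P_w)_{w ∈ S_n} of elements of P_n such that φ(Q) = ∑_{w ∈ S_n} P_w · ∂_w(Q) for all Q ∈ P_n. Consequently End_{P_n^{S_n}}(P_n) is a free left P_n-module with basis (∂_w)_{w∈S_n}, hence a free P_n^{S_n}-module of rank (n!)². -/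
open MvPolynomial

section SymmetricGroup

/-- Right multiplication by an adjacent transposition adds at most one inversion. -/
theorem inversions_mul_adjTrans_le (n : ℕ) (w : Equiv.Perm (Fin (n + 1))) (i : Fin n) :
    inversions n (w * adjTrans n i) ≤ inversions n w + 1 := by
  classical
  unfold inversions
  set A := Finset.univ.filter fun p : Fin (n + 1) × Fin (n + 1) =>
    p.1 < p.2 ∧ (w * adjTrans n i) p.2 < (w * adjTrans n i) p.1 with hA
  have hsub : (A.erase (i.castSucc, i.succ)).card ≤ (Finset.univ.filter
      fun p : Fin (n + 1) × Fin (n + 1) => p.1 < p.2 ∧ w p.2 < w p.1).card := by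
    refine Finset.card_le_card_of_injOn
      (fun p => (adjTrans n i p.1, adjTrans n i p.2)) ?_ ?_
    · rintro ⟨p, q⟩ hpq
      obtain ⟨hne, hpq⟩ := Finset.mem_erase.1 hpq
      obtain ⟨-, hlt, hw⟩ := Finset.mem_filter.1 hpq
      refine Finset.mem_coe.2 (Finset.mem_filter.2 ⟨Finset.mem_univ _, ?_, hw⟩)
      simp only [ne_eq, Prod.mk.injEq, not_and] at hne
      simp only [adjTrans, Equiv.swap_apply_def]
      simp only [Fin.ext_iff, Fin.lt_def, Fin.val_castSucc, Fin.val_succ] at hne hlt ⊢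
      split_ifs <;> first | omega | (simp only [Fin.val_castSucc, Fin.val_succ]; omega)
    · rintro ⟨p, q⟩ - ⟨p', q'⟩ - h
      simpa using h
  have := Finset.pred_card_le_card_erase (s := A) (a := (i.castSucc, i.succ))
  omega

theorem inversions_prod_le_length (n : ℕ) (L : List (Fin n)) :
    inversions n (L.map (adjTrans n)).prod ≤ L.length := by
  induction L using List.reverseRecOn with
  | nil =>
    simp only [List.map_nil, List.prod_nil, List.length_nil, Nat.le_zero, inversions,
      Finset.card_eq_zero, Finset.filter_eq_empty_iff]
    rintro ⟨p, q⟩ - ⟨h₁, h₂⟩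
    exact lt_asymm h₁ h₂
  | append_singleton L i ih =>
    have := inversions_mul_adjTrans_le n (L.map (adjTrans n)).prod i
    simp only [List.map_append, List.map_cons, List.map_nil, List.prod_append,
      List.prod_singleton, List.length_append, List.length_singleton]
    omega

/-- The inversion sets of `w` and of `w` composed with the reversal partition the pairs. -/
theorem inversions_add_inversions_mul_revPerm (n : ℕ) (w : Equiv.Perm (Fin (n + 1))) :
    inversions n w + inversions n (w * Fin.revPerm) = ∑ i : Fin (n + 1), (i : ℕ) := by
  classical
  have h : inversions n (w * Fin.revPerm) = (Finset.univ.filter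
      fun p : Fin (n + 1) × Fin (n + 1) => p.1 < p.2 ∧ ¬ w p.2 < w p.1).card := by
    unfold inversions
    refine Finset.card_bij (fun p _ => (p.2.rev, p.1.rev)) ?_ ?_ ?_
    · rintro ⟨p, q⟩ hpq
      simp only [Finset.mem_filter, Finset.mem_univ, true_and, Equiv.Perm.coe_mul,
        Function.comp_apply, Fin.revPerm_apply, Fin.rev_lt_rev, not_lt] at hpq ⊢
      exact ⟨hpq.1, hpq.2.le⟩
    · rintro ⟨p, q⟩ - ⟨p', q'⟩ - h
      simp only [Prod.mk.injEq, Fin.rev_inj] at h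
      simp [h.1, h.2]
    · rintro ⟨p, q⟩ hpq
      simp only [Finset.mem_filter, Finset.mem_univ, true_and, not_lt] at hpq
      refine ⟨(q.rev, p.rev), ?_, by simp⟩
      simp only [Finset.mem_filter, Finset.mem_univ, true_and, Equiv.Perm.coe_mul,
        Function.comp_apply, Fin.revPerm_apply, Fin.rev_rev, Fin.rev_lt_rev]
      exact ⟨hpq.1, lt_of_le_of_ne hpq.2 fun h => hpq.1.ne (w.injective h)⟩
  rw [h]
  unfold inversions
  simp only [← Finset.filter_filter]
  rw [Finset.card_filter_add_card_filter_not, Finset.card_filter, Fintype.sum_prod_type_right]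
  refine Finset.sum_congr rfl fun i _ => ?_
  rw [← Finset.card_filter, Finset.filter_gt_eq_Iio, Fin.card_Iio]

theorem two_mul_sum_inversions (n : ℕ) :
    2 * ∑ w, inversions n w = (n + 1).factorial * ∑ i : Fin (n + 1), (i : ℕ) := by
  have h : ∑ w, inversions n (w * Fin.revPerm) = ∑ w, inversions n w :=
    Equiv.sum_comp (Equiv.mulRight (Fin.revPerm : Equiv.Perm (Fin (n + 1)))) (inversions n)
  rw [two_mul]
  nth_rewrite 2 [← h]
  rw [← Finset.sum_add_distrib,
    Finset.sum_congr rfl fun w _ => inversions_add_inversions_mul_revPerm n w]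
  simp [Fintype.card_perm]

end SymmetricGroup

section Staircase

/-- Exponents of the staircase monomials in `N` variables. -/
abbrev StaircaseExponent (N : ℕ) : Type := (i : Fin N) → Fin (N - i)

theorem card_staircaseExponent (N : ℕ) :
    Fintype.card (StaircaseExponent N) = N.factorial := by
  rw [Fintype.card_pi]
  simp only [Fintype.card_fin]
  rw [Fin.prod_univ_eq_prod_range (fun i => N - i) N, ← Nat.descFactorial_eq_prod_range,
    Nat.descFactorial_self]

theorem two_mul_sum_staircaseExponent (N : ℕ) :
    2 * ∑ a : StaircaseExponent N, ∑ i, (a i : ℕ) = N.factorial * ∑ i : Fin N, (i : ℕ) := by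
  let r : StaircaseExponent N ≃ StaircaseExponent N := Equiv.piCongrRight fun _ => Fin.revPerm
  have h : ∑ a, ∑ i, (r a i : ℕ) = ∑ a : StaircaseExponent N, ∑ i, (a i : ℕ) :=
    r.sum_comp fun a => ∑ i, (a i : ℕ)
  have hrev : ∑ i : Fin N, (N - 1 - (i : ℕ)) = ∑ i : Fin N, (i : ℕ) := by
    rw [← Equiv.sum_comp Fin.revPerm]
    refine Finset.sum_congr rfl fun i _ => ?_
    simp only [Fin.revPerm_apply, Fin.val_rev]
    omega
  rw [two_mul]
  nth_rewrite 2 [← h]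
  rw [← Finset.sum_add_distrib, Finset.sum_congr rfl (g := fun _ => ∑ i : Fin N, (i : ℕ))]
  · simp only [Finset.sum_const, Finset.card_univ, card_staircaseExponent, smul_eq_mul]
  · intro a _
    rw [← Finset.sum_add_distrib, ← hrev]
    refine Finset.sum_congr rfl fun i _ => ?_
    have := (a i).isLt
    simp only [r, Equiv.piCongrRight_apply, Pi.map_apply, Fin.revPerm_apply, Fin.val_rev]
    omega

open Polynomial in
/-- If the `x i` generate `A` over `R` and are the roots of a polynomial with coefficients in `R`,
then the staircase monomials in the `x i` span `A` over `R`. -/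
theorem span_staircase_eq_top.{u} {A R : Type u} [CommRing A] [CommRing R]
    [Algebra R A] {N : ℕ} (x : Fin N → A)
    (hx : (∏ i, (Polynomial.X - Polynomial.C (x i)) : A[X]) ∈ Polynomial.lifts (algebraMap R A))
    (hgen : Algebra.adjoin R (Set.range x) = ⊤) :
    Submodule.span R (Set.range fun a : StaircaseExponent N => ∏ i, x i ^ (a i : ℕ)) = ⊤ := by
  nontriviality A
  induction N generalizing R with
  | zero =>
    have h : (Set.range fun a : StaircaseExponent 0 => ∏ i, x i ^ (a i : ℕ)) = {1} := by
      ext y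
      simp
    rw [h, ← Submodule.one_eq_span, ← Algebra.toSubmodule_bot, ← Algebra.top_toSubmodule, ← hgen]
    simp
  | succ N ih =>
    let R' := Algebra.adjoin R {x 0}
    let x₀ : R' := ⟨x 0, Algebra.self_mem_adjoin_singleton R (x 0)⟩
    obtain ⟨f, hf, hdeg, hmonic⟩ := Polynomial.lifts_and_natDegree_eq_and_monic hx
      (monic_prod_of_monic _ _ fun i _ => monic_X_sub_C (x i))
    have hdeg' : f.natDegree = N + 1 := by
      rw [hdeg, natDegree_prod_of_monic _ _ fun i _ => monic_X_sub_C (x i)]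
      simp
    have hroot : aeval (x 0) f = 0 := by
      rw [← eval_map_algebraMap, hf, Polynomial.eval_prod]
      exact Finset.prod_eq_zero (Finset.mem_univ 0) (by simp)
    have htail : (∏ i : Fin N, (Polynomial.X - Polynomial.C (x i.succ)) : A[X]) ∈
        Polynomial.lifts (algebraMap R' A) := by
      rw [Polynomial.mem_lifts]
      refine ⟨f.map (algebraMap R R') /ₘ (Polynomial.X - Polynomial.C x₀), ?_⟩
      rw [map_divByMonic _ (monic_X_sub_C _), Polynomial.map_map,
        ← IsScalarTower.algebraMap_eq, hf, Fin.prod_univ_succ]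
      simp only [Polynomial.map_sub, Polynomial.map_X, Polynomial.map_C]
      exact mul_divByMonic_cancel_left _ (monic_X_sub_C _)
    have hgen' : Algebra.adjoin R' (Set.range fun i : Fin N => x i.succ) = ⊤ := by
      refine top_le_iff.1 fun y _ => ?_
      have hy : y ∈ Algebra.adjoin R (Set.range x) := hgen ▸ Algebra.mem_top
      rw [← Subalgebra.mem_restrictScalars R]
      refine Algebra.adjoin_le ?_ hy
      rintro _ ⟨i, rfl⟩
      refine Fin.cases ?_ (fun j => ?_) i
      · exact (Subalgebra.mem_restrictScalars R).2 (Subalgebra.algebraMap_mem _ x₀)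
      · have h : x j.succ ∈ Algebra.adjoin R' (Set.range fun i : Fin N => x i.succ) :=
          Algebra.subset_adjoin (Set.mem_range_self j)
        exact (Subalgebra.mem_restrictScalars R).2 h
    have hspan := ih (R := R') (fun i => x i.succ) htail hgen'
    have hpow : Submodule.span R (Set.range fun m : Fin (N + 1) => x₀ ^ (m : ℕ)) = ⊤ := by
      refine Submodule.map_injective_of_injective
        (f := R'.val.toLinearMap) Subtype.val_injective ?_
      have := Submodule.span_range_natDegree_eq_adjoin hmonic hroot
      rw [hdeg'] at this
      rw [Submodule.map_span, ← Set.range_comp, Submodule.map_top]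
      convert this using 2
      · ext y
        simp [x₀, Fin.exists_iff]
      · ext y
        simp [R']
    have key := Submodule.span_smul_of_span_eq_top hpow
      (Set.range fun a : StaircaseExponent N => ∏ i, x i.succ ^ (a i : ℕ))
    rw [hspan, Submodule.restrictScalars_top] at key
    rw [← top_le_iff, ← key]
    refine Submodule.span_mono ?_
    rintro _ ⟨_, ⟨m, rfl⟩, _, ⟨a, rfl⟩, rfl⟩
    refine ⟨Fin.cons (α := fun i : Fin (N + 1) => Fin (N + 1 - i)) m
      (fun i => (a i).cast (by simp)), ?_⟩
    simp only [Fin.prod_univ_succ, Algebra.smul_def, map_pow]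
    rfl

end Staircase

section DemazureOperators

variable {n : ℕ}
  {D : Fin n → MvPolynomial (Fin (n + 1)) ℤ →ₗ[ℤ] MvPolynomial (Fin (n + 1)) ℤ}

/-- The defining property of the family of Demazure operators. -/
def IsDemazureFamily
    (D : Fin n → MvPolynomial (Fin (n + 1)) ℤ →ₗ[ℤ] MvPolynomial (Fin (n + 1)) ℤ) : Prop :=
  ∀ (i : Fin n) (P : MvPolynomial (Fin (n + 1)) ℤ),
    (X i.succ - X i.castSucc) * D i P = P - rename (Equiv.swap i.castSucc i.succ) P

theorem X_succ_sub_X_castSucc_ne_zero (i : Fin n) :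
    (X i.succ - X i.castSucc : MvPolynomial (Fin (n + 1)) ℤ) ≠ 0 :=
  sub_ne_zero.2 fun h => i.castSucc_lt_succ.ne' (X_injective h)

namespace IsDemazureFamily

theorem apply_symmetric_mul (hD : IsDemazureFamily D) (i : Fin n)
    {s : MvPolynomial (Fin (n + 1)) ℤ} (hs : s.IsSymmetric) (Q : MvPolynomial (Fin (n + 1)) ℤ) :
    D i (s * Q) = s * D i Q := by
  refine mul_left_cancel₀ (X_succ_sub_X_castSucc_ne_zero i) ?_
  rw [hD, map_mul, hs, mul_left_comm, hD, mul_sub]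

theorem foldr_symmetric_mul (hD : IsDemazureFamily D) (L : List (Fin n))
    {s : MvPolynomial (Fin (n + 1)) ℤ} (hs : s.IsSymmetric) (Q : MvPolynomial (Fin (n + 1)) ℤ) :
    L.foldr (fun i Q' => D i Q') (s * Q) = s * L.foldr (fun i Q' => D i Q') Q := by
  induction L with
  | nil => rfl
  | cons i L ih => simp [ih, hD.apply_symmetric_mul i hs]

theorem foldr_pow_two_mul (hD : IsDemazureFamily D) (L : List (Fin n)) (k : ℕ)
    (Q : MvPolynomial (Fin (n + 1)) ℤ) :
    L.foldr (fun i Q' => D i Q') (2 ^ k * Q) = 2 ^ k * L.foldr (fun i Q' => D i Q') Q :=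
  hD.foldr_symmetric_mul L (fun e => by rw [map_pow, map_ofNat]) Q

/-- Each `D i` is homogeneous of degree `-1`, as seen by the substitution `X j ↦ 2 * X j`. -/
theorem apply_scale (hD : IsDemazureFamily D) (i : Fin n) (Q : MvPolynomial (Fin (n + 1)) ℤ) :
    D i (aeval (fun j => 2 * X j) Q) =
      2 * aeval (fun j => 2 * X j : Fin (n + 1) → MvPolynomial (Fin (n + 1)) ℤ) (D i Q) := by
  set σ : MvPolynomial (Fin (n + 1)) ℤ →ₐ[ℤ] MvPolynomial (Fin (n + 1)) ℤ :=
    aeval fun j => 2 * X j with hσ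
  have hcomm : rename (Equiv.swap i.castSucc i.succ) (σ Q) =
      σ (rename (Equiv.swap i.castSucc i.succ) Q) := by
    rw [hσ, aeval_rename, ← AlgHom.comp_apply, comp_aeval]
    simp [Function.comp_def, map_ofNat (rename (R := ℤ) _) 2]
  refine mul_left_cancel₀ (X_succ_sub_X_castSucc_ne_zero i) ?_
  have h := congrArg σ (hD i Q)
  rw [hD, hcomm, ← map_sub, ← h, map_mul, map_sub]
  simp only [hσ, aeval_X]
  ring

theorem foldr_scale (hD : IsDemazureFamily D) (L : List (Fin n))
    (Q : MvPolynomial (Fin (n + 1)) ℤ) :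
    L.foldr (fun i Q' => D i Q') (aeval (fun j => 2 * X j) Q) =
      2 ^ L.length * aeval (fun j => 2 * X j : Fin (n + 1) → MvPolynomial (Fin (n + 1)) ℤ)
        (L.foldr (fun i Q' => D i Q') Q) := by
  induction L with
  | nil => simp
  | cons i L ih =>
    have h := hD.foldr_pow_two_mul [i] L.length
    simp only [List.foldr_cons, List.foldr_nil] at h
    rw [List.foldr_cons, ih, h, hD.apply_scale, List.foldr_cons, List.length_cons]
    ring

/-- After passing to a field, a composite of Demazure operators along a word is a combination of
permutations; the product of the word is the only one without a defect in inversions, and it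
occurs if the word is reduced. -/
theorem exists_expansion (hD : IsDemazureFamily D) {K : Type*} [Field K]
    (π : MvPolynomial (Fin (n + 1)) ℤ →+* K) (hπ : Function.Injective fun j => π (X j))
    (L : List (Fin n)) :
    ∃ a : Equiv.Perm (Fin (n + 1)) → K,
      (∀ Q, π (L.foldr (fun i Q' => D i Q') Q) = ∑ v, a v * π (rename v Q)) ∧
      (∀ v, a v ≠ 0 → v = (L.map (adjTrans n)).prod ∨ inversions n v < L.length) ∧
      (inversions n (L.map (adjTrans n)).prod = L.length →
        a (L.map (adjTrans n)).prod ≠ 0) := by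
  induction L using List.reverseRecOn with
  | nil =>
    classical
    refine ⟨fun v => if v = 1 then 1 else 0, fun Q => ?_, fun v hv => ?_, fun _ => by simp⟩
    · rw [Finset.sum_eq_single 1]
      · simp [show ((1 : Equiv.Perm (Fin (n + 1))) : Fin (n + 1) → Fin (n + 1)) = id from rfl]
      · intro v _ hv
        simp [hv]
      · simp
    · left
      by_contra h
      exact hv (if_neg h)
  | append_singleton L i ih =>
    obtain ⟨a, hexp, hsupp, hlead⟩ := ih
    set p := (L.map (adjTrans n)).prod with hp
    have hprod : ((L ++ [i]).map (adjTrans n)).prod = p * adjTrans n i := by simp [hp]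
    have hss : adjTrans n i * adjTrans n i = 1 := by simp [adjTrans]
    have hss' (v : Equiv.Perm (Fin (n + 1))) : v * adjTrans n i * adjTrans n i = v := by
      rw [mul_assoc, hss, mul_one]
    have hlen := inversions_prod_le_length n L
    rw [← hp] at hlen
    let d : Equiv.Perm (Fin (n + 1)) → K := fun v => π (X (v i.succ)) - π (X (v i.castSucc))
    have hd (v) : d v ≠ 0 :=
      sub_ne_zero.2 fun h => i.castSucc_lt_succ.ne' (v.injective (hπ h))
    have hds (v) : d (v * adjTrans n i) = - d v := by
      simp [d, adjTrans]
    rw [hprod]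
    refine ⟨fun v => (a v + a (v * adjTrans n i)) / d v, fun Q => ?_, fun v hv => ?_, fun h => ?_⟩
    · have hstep (v : Equiv.Perm (Fin (n + 1))) : π (rename v (D i Q)) =
          (π (rename v Q) - π (rename (v * adjTrans n i : Equiv.Perm _) Q)) / d v := by
        rw [eq_div_iff (hd v)]
        have := congrArg (fun R => π (rename v R)) (hD i Q)
        simp only [map_mul, map_sub, rename_X, rename_rename] at this
        rw [mul_comm]
        exact this
      rw [List.foldr_append, List.foldr_cons, List.foldr_nil, hexp]
      simp only [hstep]
      have hre : ∑ v, a v * (π (rename (v * adjTrans n i : Equiv.Perm _) Q) / d v) =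
          ∑ v, a (v * adjTrans n i) * (π (rename v Q) / d (v * adjTrans n i)) := by
        rw [← Equiv.sum_comp (Equiv.mulRight (adjTrans n i))]
        simp only [Equiv.coe_mulRight, hss']
      simp only [sub_div, mul_sub, Finset.sum_sub_distrib, hre, hds]
      rw [← Finset.sum_sub_distrib]
      refine Finset.sum_congr rfl fun v _ => ?_
      have := hd v
      field_simp
      ring
    · rw [List.length_append, List.length_singleton]
      have hv' : a v ≠ 0 ∨ a (v * adjTrans n i) ≠ 0 := by
        by_contra! h
        exact hv (by simp [h.1, h.2])
      rcases hv' with h | h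
      · right
        rcases hsupp v h with rfl | h' <;> omega
      · rcases hsupp _ h with h' | h'
        · left
          rw [← h', hss']
        · right
          have := inversions_mul_adjTrans_le n (v * adjTrans n i) i
          rw [hss'] at this
          omega
    · rw [List.length_append, List.length_singleton] at h
      have hle := inversions_mul_adjTrans_le n p i
      have hz : a (p * adjTrans n i) = 0 := by
        by_contra hne
        rcases hsupp _ hne with h' | h'
        · rw [h'] at h
          omega
        · omega
      simp only [hz, hss', zero_add]
      exact div_ne_zero (hlead (by omega)) (hd _)

/-- Demazure operators along reduced words are linearly independent over any field into which
the variables map injectively. -/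
theorem eq_zero_of_sum_eq_zero (hD : IsDemazureFamily D) {K : Type*} [Field K]
    (π : MvPolynomial (Fin (n + 1)) ℤ →+* K) (hπ : Function.Injective fun j => π (X j))
    {l : Equiv.Perm (Fin (n + 1)) → List (Fin n)}
    (hred : ∀ w, ((l w).map (adjTrans n)).prod = w ∧ (l w).length = inversions n w)
    (c : Equiv.Perm (Fin (n + 1)) → K)
    (hc : ∀ Q, ∑ w, c w * π ((l w).foldr (fun i Q' => D i Q') Q) = 0) : c = 0 := by
  choose a hexp hsupp hlead using fun w => hD.exists_expansion π hπ (l w)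
  let χ : Equiv.Perm (Fin (n + 1)) → MvPolynomial (Fin (n + 1)) ℤ →* K :=
    fun v => (π.comp (rename v).toRingHom : MvPolynomial (Fin (n + 1)) ℤ →+* K)
  have hχ : Function.Injective χ := fun v v' h => by
    ext1 j
    have := DFunLike.congr_fun h (X j)
    exact hπ (by simpa [χ] using this)
  have hzero : ∀ v, ∑ w, c w * a w v = 0 := by
    refine Fintype.linearIndependent_iff.1
      ((linearIndependent_monoidHom (MvPolynomial (Fin (n + 1)) ℤ) K).comp χ hχ) _ ?_
    ext Q
    rw [Pi.zero_apply, ← hc Q]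
    simp only [hexp, Finset.mul_sum, Finset.sum_apply, Pi.smul_apply, smul_eq_mul,
      Finset.sum_mul, Function.comp_apply]
    rw [Finset.sum_comm]
    refine Finset.sum_congr rfl fun w _ => Finset.sum_congr rfl fun v _ => ?_
    rw [mul_assoc]
    rfl
  by_contra hne
  obtain ⟨w₀, hw₀⟩ := Function.ne_iff.1 hne
  obtain ⟨w, hw, hmax⟩ := Set.exists_max_image {w | c w ≠ 0} (inversions n) (Set.toFinite _)
    ⟨w₀, hw₀⟩
  have h := hzero w
  rw [Finset.sum_eq_single w] at h
  · have := hlead w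
    rw [(hred w).1, (hred w).2] at this
    exact mul_ne_zero hw (this rfl) h
  · intro w' _ hw'
    by_contra hmul
    rcases hsupp w' w (right_ne_zero_of_mul hmul) with h' | h'
    · exact hw' (h'.trans (hred w').1).symm
    · rw [(hred w').2] at h'
      exact absurd (hmax w' (left_ne_zero_of_mul hmul)) h'.not_ge
  · simp

end IsDemazureFamily

end DemazureOperators

section Determinant

/-- The staircase monomial with exponent `a`. -/
noncomputable def staircaseMonomial {N : ℕ} (a : StaircaseExponent N) :
    MvPolynomial (Fin N) ℤ :=
  ∏ i, X i ^ (a i : ℕ)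

theorem prod_X_sub_C_mem_lifts_symmetricSubalgebra (N : ℕ) :
    ∏ i : Fin N, (Polynomial.X - Polynomial.C (X i : MvPolynomial (Fin N) ℤ)) ∈
      Polynomial.lifts (algebraMap (symmetricSubalgebra (Fin N) ℤ) (MvPolynomial (Fin N) ℤ)) := by
  rw [Polynomial.lifts_iff_coeff_lifts]
  intro k
  have h : ((∏ i : Fin N, (Polynomial.X - Polynomial.C (X i : MvPolynomial (Fin N) ℤ))).coeff
      k).IsSymmetric := by
    intro e
    have hmap : (∏ i : Fin N, (Polynomial.X - Polynomial.C (X i : MvPolynomial (Fin N) ℤ))).map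
        (rename e : MvPolynomial (Fin N) ℤ →ₐ[ℤ] _).toRingHom =
        ∏ i : Fin N, (Polynomial.X - Polynomial.C (X i : MvPolynomial (Fin N) ℤ)) := by
      rw [Polynomial.map_prod, ← Equiv.prod_comp e fun i =>
        (Polynomial.X - Polynomial.C (X i : MvPolynomial (Fin N) ℤ))]
      simp
    have := congrArg (fun p => p.coeff k) hmap
    rwa [Polynomial.coeff_map] at this
  exact ⟨⟨_, h⟩, rfl⟩

theorem adjoin_symmetricSubalgebra_range_X (N : ℕ) :
    Algebra.adjoin (symmetricSubalgebra (Fin N) ℤ)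
      (Set.range (X : Fin N → MvPolynomial (Fin N) ℤ)) = ⊤ := by
  refine top_le_iff.1 fun p _ => ?_
  induction p using MvPolynomial.induction_on with
  | C a => exact Subalgebra.algebraMap_mem _ (algebraMap ℤ (symmetricSubalgebra (Fin N) ℤ) a)
  | add p q hp hq => exact add_mem (hp trivial) (hq trivial)
  | mul_X p i hp => exact mul_mem (hp trivial) (Algebra.subset_adjoin (Set.mem_range_self i))

/-- The staircase monomials span the polynomials over the symmetric ones. -/
theorem span_staircaseMonomial (N : ℕ) :
    Submodule.span (symmetricSubalgebra (Fin N) ℤ) (Set.range (staircaseMonomial (N := N))) = ⊤ :=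
  span_staircase_eq_top (fun i : Fin N => (X i : MvPolynomial (Fin N) ℤ))
    (prod_X_sub_C_mem_lifts_symmetricSubalgebra N) (adjoin_symmetricSubalgebra_range_X N)

/-- A map that is semilinear over the symmetric polynomials vanishes if it vanishes on the
staircase monomials. -/
theorem eq_zero_of_staircaseMonomial {N : ℕ} {A : Type*} [CommRing A]
    (ρ : MvPolynomial (Fin N) ℤ →+* A) (F : MvPolynomial (Fin N) ℤ → A)
    (hadd : ∀ P Q, F (P + Q) = F P + F Q)
    (hmul : ∀ s Q, s.IsSymmetric → F (s * Q) = ρ s * F Q)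
    (h : ∀ a, F (staircaseMonomial a) = 0) (Q : MvPolynomial (Fin N) ℤ) : F Q = 0 := by
  have hQ : Q ∈ Submodule.span (symmetricSubalgebra (Fin N) ℤ)
      (Set.range (staircaseMonomial (N := N))) := span_staircaseMonomial N ▸ Submodule.mem_top
  induction hQ using Submodule.span_induction with
  | mem _ hx =>
    obtain ⟨a, rfl⟩ := hx
    exact h a
  | zero => simpa using hadd 0 0
  | add P Q _ _ hP hQ => rw [hadd, hP, hQ, add_zero]
  | smul s Q _ hQ => rw [Subalgebra.smul_def, smul_eq_mul, hmul _ _ s.2, hQ, mul_zero]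

/-- A polynomial invariant under doubling all variables is constant. -/
theorem eq_C_of_scale_eq {σ : Type*} (p : MvPolynomial σ ℤ)
    (hp : aeval (fun j => 2 * X j : σ → MvPolynomial σ ℤ) p = p) : p = C (constantCoeff p) := by
  classical
  have hcoeff : ∀ (q : MvPolynomial σ ℤ) (m : σ →₀ ℕ),
      coeff m (aeval (fun j => 2 * X j : σ → MvPolynomial σ ℤ) q) = 2 ^ m.degree * coeff m q := by
    intro q m
    induction q using MvPolynomial.induction_on' with
    | monomial u a =>
      have : aeval (fun j => 2 * X j : σ → MvPolynomial σ ℤ) (monomial u a) =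
          C (2 ^ u.degree) * monomial u a := by
        rw [aeval_monomial, monomial_eq]
        simp only [mul_pow, Finsupp.prod_mul, algebraMap_eq]
        rw [Finsupp.prod, Finset.prod_pow_eq_pow_sum, Finsupp.degree_apply]
        simp only [map_pow, map_ofNat]
        ring
      rw [this, coeff_C_mul, coeff_monomial]
      split_ifs with h
      · rw [h]
      · simp
    | add p q hp hq => rw [map_add, coeff_add, hp, hq, coeff_add, mul_add]
  ext m
  rw [coeff_C]
  split_ifs with h
  · rw [← h]
    rfl
  · have hm := hcoeff p m
    rw [hp] at hm
    have hdeg : m.degree ≠ 0 := fun h' => h (Finsupp.degree_eq_zero_iff m |>.1 h').symm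
    have h2 : (2 : ℤ) ^ m.degree ≠ 1 := (one_lt_pow₀ one_lt_two hdeg).ne'
    by_contra hne
    exact h2 (mul_right_cancel₀ hne (by rw [← hm, one_mul]))

variable {n : ℕ}
  {D : Fin n → MvPolynomial (Fin (n + 1)) ℤ →ₗ[ℤ] MvPolynomial (Fin (n + 1)) ℤ}

theorem foldr_add (L : List (Fin n)) (P Q : MvPolynomial (Fin (n + 1)) ℤ) :
    L.foldr (fun i Q' => D i Q') (P + Q) =
      L.foldr (fun i Q' => D i Q') P + L.foldr (fun i Q' => D i Q') Q := by
  induction L with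
  | nil => rfl
  | cons i L ih => simp [ih]

/-- The values of the operators `∂_w` on the staircase monomials. -/
noncomputable def demazureMatrix
    (D : Fin n → MvPolynomial (Fin (n + 1)) ℤ →ₗ[ℤ] MvPolynomial (Fin (n + 1)) ℤ)
    (l : Equiv.Perm (Fin (n + 1)) → List (Fin n))
    (e : Equiv.Perm (Fin (n + 1)) ≃ StaircaseExponent (n + 1)) :
    Matrix (Equiv.Perm (Fin (n + 1))) (Equiv.Perm (Fin (n + 1)))
      (MvPolynomial (Fin (n + 1)) ℤ) :=
  Matrix.of fun w u => (l w).foldr (fun i Q' => D i Q') (staircaseMonomial (e u))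

variable {l : Equiv.Perm (Fin (n + 1)) → List (Fin n)}
  (e : Equiv.Perm (Fin (n + 1)) ≃ StaircaseExponent (n + 1))

namespace IsDemazureFamily

theorem det_demazureMatrix_eq_C (hD : IsDemazureFamily D)
    (hlen : ∀ w, (l w).length = inversions n w) :
    (demazureMatrix D l e).det = C (constantCoeff (demazureMatrix D l e).det) := by
  refine eq_C_of_scale_eq _ ?_
  set σ : MvPolynomial (Fin (n + 1)) ℤ →ₐ[ℤ] MvPolynomial (Fin (n + 1)) ℤ :=
    aeval fun j => 2 * X j with hσ
  let d : Equiv.Perm (Fin (n + 1)) → ℕ := fun u => ∑ i, (e u i : ℕ)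
  have hmon (u) : σ (staircaseMonomial (e u)) = 2 ^ d u * staircaseMonomial (e u) := by
    simp only [staircaseMonomial, map_prod, map_pow, hσ, aeval_X, mul_pow,
      Finset.prod_mul_distrib, Finset.prod_pow_eq_pow_sum, d]
  have hentry (w u) : 2 ^ d u * demazureMatrix D l e w u =
      2 ^ (l w).length * σ (demazureMatrix D l e w u) := by
    simp only [demazureMatrix, Matrix.of_apply]
    rw [← hD.foldr_scale, ← hD.foldr_pow_two_mul, ← hmon]
  have hsum : ∑ w, (l w).length = ∑ u, d u := by
    have h₁ := two_mul_sum_inversions n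
    have h₂ := two_mul_sum_staircaseExponent (n + 1)
    rw [← e.sum_comp] at h₂
    simp only [hlen]
    have : 2 * ∑ u, d u = 2 * ∑ w, inversions n w := h₂.trans h₁.symm
    omega
  have hdet := Matrix.det_mul_row (fun u => (2 : MvPolynomial (Fin (n + 1)) ℤ) ^ d u)
    (demazureMatrix D l e)
  have hdet' := Matrix.det_mul_column
    (fun w => (2 : MvPolynomial (Fin (n + 1)) ℤ) ^ (l w).length)
    ((demazureMatrix D l e).map σ)
  simp only [hentry] at hdet
  simp only [Matrix.map_apply] at hdet'
  rw [hdet', Finset.prod_pow_eq_pow_sum, Finset.prod_pow_eq_pow_sum, hsum] at hdet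
  have hσdet : σ (demazureMatrix D l e).det = ((demazureMatrix D l e).map σ).det :=
    AlgHom.map_det σ _
  rw [hσdet]
  exact mul_left_cancel₀ (pow_ne_zero _ two_ne_zero) hdet

theorem map_det_demazureMatrix_ne_zero (hD : IsDemazureFamily D)
    (hred : ∀ w, ((l w).map (adjTrans n)).prod = w ∧ (l w).length = inversions n w)
    {K : Type*} [Field K] (π : MvPolynomial (Fin (n + 1)) ℤ →+* K)
    (hπ : Function.Injective fun j => π (X j)) : π (demazureMatrix D l e).det ≠ 0 := by
  intro h
  rw [RingHom.map_det] at h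
  obtain ⟨c, hc, hc0⟩ := Matrix.exists_vecMul_eq_zero_iff.2 h
  refine hc (hD.eq_zero_of_sum_eq_zero π hπ hred c ?_)
  refine eq_zero_of_staircaseMonomial π _ (fun P Q => ?_) (fun s Q hs => ?_) fun a => ?_
  · simp only [foldr_add, map_add, mul_add, Finset.sum_add_distrib]
  · simp only [hD.foldr_symmetric_mul _ hs, map_mul, Finset.mul_sum, mul_left_comm]
  · have := congrFun hc0 (e.symm a)
    simpa [Matrix.vecMul, dotProduct, demazureMatrix] using this

theorem isUnit_det_demazureMatrix (hD : IsDemazureFamily D)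
    (hred : ∀ w, ((l w).map (adjTrans n)).prod = w ∧ (l w).length = inversions n w) :
    IsUnit (demazureMatrix D l e).det := by
  have hC := hD.det_demazureMatrix_eq_C e fun w => (hred w).2
  rw [hC]
  refine IsUnit.map C (Int.isUnit_iff_natAbs_eq.2 ?_)
  by_contra hne
  obtain ⟨p, hp, hdvd⟩ := Nat.exists_prime_and_dvd hne
  have := Fact.mk hp
  let π : MvPolynomial (Fin (n + 1)) ℤ →+* FractionRing (MvPolynomial (Fin (n + 1)) (ZMod p)) :=
    (algebraMap _ _).comp (MvPolynomial.map (Int.castRingHom (ZMod p)))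
  have hπ : Function.Injective fun j => π (X j) := fun i j h => by
    simp only [π, RingHom.comp_apply, map_X] at h
    exact X_injective (IsFractionRing.injective _ (FractionRing (MvPolynomial (Fin (n + 1)) (ZMod p))) h)
  refine hD.map_det_demazureMatrix_ne_zero e hred π hπ ?_
  rw [hC]
  have hz : Int.castRingHom (ZMod p) (constantCoeff (demazureMatrix D l e).det) = 0 := by
    rw [eq_intCast, ZMod.intCast_zmod_eq_zero_iff_dvd]
    exact Int.natCast_dvd.2 hdvd
  simp only [π, RingHom.comp_apply, map_C, hz, map_zero]

end IsDemazureFamily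

end Determinant

/-- Every endomorphism of `P_n = ℤ[X_1, …, X_{n+1}]` that is linear over the subring
`P_n^{S_{n+1}}` of symmetric polynomials can be written uniquely as `∑_w m_{P_w} ∘ ∂_w`
with `P_w ∈ P_n`: the composite Demazure operators `(∂_w)_w` form a basis of
`End_{P_n^{S_{n+1}}}(P_n)` as a free left `P_n`-module. -/
theorem demazure_operators_basis_of_endomorphisms (n : ℕ)
    (D : Fin n → MvPolynomial (Fin (n + 1)) ℤ →ₗ[ℤ] MvPolynomial (Fin (n + 1)) ℤ)
    (hD : ∀ (i : Fin n) (P : MvPolynomial (Fin (n + 1)) ℤ),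
      (X i.succ - X i.castSucc) * D i P =
        P - rename (Equiv.swap i.castSucc i.succ) P)
    (l : Equiv.Perm (Fin (n + 1)) → List (Fin n))
    (hred : ∀ w, ((l w).map (adjTrans n)).prod = w ∧ (l w).length = inversions n w)
    (φ : MvPolynomial (Fin (n + 1)) ℤ
        →ₗ[symmetricSubalgebra (Fin (n + 1)) ℤ] MvPolynomial (Fin (n + 1)) ℤ) :
    ∃! P : Equiv.Perm (Fin (n + 1)) → MvPolynomial (Fin (n + 1)) ℤ,
      ∀ Q : MvPolynomial (Fin (n + 1)) ℤ,
        φ Q = ∑ w : Equiv.Perm (Fin (n + 1)), P w * (l w).foldr (fun i Q' => D i Q') Q := by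
  classical
  have hD : IsDemazureFamily D := hD
  have hcard : Fintype.card (Equiv.Perm (Fin (n + 1))) =
      Fintype.card (StaircaseExponent (n + 1)) := by
    rw [Fintype.card_perm, Fintype.card_fin, card_staircaseExponent]
  let e := Fintype.equivOfCardEq hcard
  have hunit := hD.isUnit_det_demazureMatrix e hred
  let v : Equiv.Perm (Fin (n + 1)) → MvPolynomial (Fin (n + 1)) ℤ :=
    fun u => φ (staircaseMonomial (e u))
  have hiff (P : Equiv.Perm (Fin (n + 1)) → MvPolynomial (Fin (n + 1)) ℤ) :
      (∀ Q, φ Q = ∑ w, P w * (l w).foldr (fun i Q' => D i Q') Q) ↔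
        Matrix.vecMul P (demazureMatrix D l e) = v := by
    refine ⟨fun h => funext fun u => (h _).symm, fun h Q => sub_eq_zero.1 ?_⟩
    refine eq_zero_of_staircaseMonomial (RingHom.id _)
      (fun Q => φ Q - ∑ w, P w * (l w).foldr (fun i Q' => D i Q') Q)
      (fun P Q => ?_) (fun s Q hs => ?_) (fun a => ?_) Q
    · simp only [foldr_add, map_add, mul_add, Finset.sum_add_distrib]
      ring
    · have hφ : φ (s * Q) = s * φ Q :=
        φ.map_smul (⟨s, hs⟩ : symmetricSubalgebra (Fin (n + 1)) ℤ) Q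
      simp only [hφ, hD.foldr_symmetric_mul _ hs, mul_sub, Finset.mul_sum, mul_left_comm,
        RingHom.id_apply]
    · have ha := congrFun h (e.symm a)
      simp only [Matrix.vecMul, dotProduct, demazureMatrix, Matrix.of_apply, v,
        Equiv.apply_symm_apply] at ha
      rw [ha, sub_self]
  simp only [hiff]
  refine ⟨Matrix.vecMul v (demazureMatrix D l e)⁻¹, ?_, fun P hP => ?_⟩
  · simp only [Matrix.vecMul_vecMul, Matrix.nonsing_inv_mul _ hunit, Matrix.vecMul_one]
  · simp only at hP
    rw [← hP, Matrix.vecMul_vecMul, Matrix.mul_nonsing_inv _ hunit, Matrix.vecMul_one]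
end

section
/- Let n ≥ 1, P_n = ℤ[X_1,…,X_n], and let ∂_{w0} be the composite of Demazure operators associated to a reduced expression of the longest element w0 of S_n. Then: (a) for every P ∈ P_n, ∂_{w0}(P) is a symmetric polynomial, i.e., ∂_{w0}(P) ∈ P_n^{S_n}; and (b) ∂_{w0} is a symmetrizing form for P_n over P_n^{S_n}: the P_n^{S_n}-linear map P_n → Hom_{P_n^{S_n}}(P_n, P_n^{S_n}), a ↦ (b ↦ ∂_{w0}(ab)), is bijective. -/
open MvPolynomial

namespace Demazure

/-- The pairs `(i, j)` with `i < j`, i.e. the positive roots of type `A`. -/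
def posPairs (N : ℕ) : Finset (Fin N × Fin N) :=
  Finset.univ.filter fun p => p.1 < p.2

theorem mem_posPairs {N : ℕ} {p : Fin N × Fin N} : p ∈ posPairs N ↔ p.1 < p.2 := by
  simp [posPairs]

theorem card_posPairs (N : ℕ) : (posPairs N).card = N * (N - 1) / 2 := by
  have h : (posPairs N).card = ∑ j : Fin N, (j : ℕ) := by
    rw [posPairs, Finset.card_filter, Fintype.sum_prod_type_right]
    refine Finset.sum_congr rfl fun j _ => ?_
    rw [← Finset.card_filter, Finset.filter_gt_eq_Iio, Fin.card_Iio]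
  rw [h, Fin.sum_univ_eq_sum_range fun j => j, Finset.sum_range_id]

/-- The number of inversions of a permutation. -/
def inversions {N : ℕ} (w : Equiv.Perm (Fin N)) : ℕ :=
  ((posPairs N).filter fun p => w p.2 < w p.1).card

theorem inversions_revPerm (N : ℕ) :
    inversions (Fin.revPerm : Equiv.Perm (Fin N)) = N * (N - 1) / 2 := by
  rw [inversions, Finset.filter_true_of_mem, card_posPairs]
  intro p hp
  simpa using mem_posPairs.1 hp

theorem inversions_adjTrans_mul_le {n : ℕ} (i : Fin n) (w : Equiv.Perm (Fin (n + 1))) :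
    inversions (adjTrans n i * w) ≤ inversions w + 1 := by
  refine le_trans (Finset.card_le_card (t := insert (w⁻¹ i.castSucc, w⁻¹ i.succ)
    ((posPairs (n + 1)).filter fun p => w p.2 < w p.1)) ?_) (Finset.card_insert_le _ _)
  intro p hp
  obtain ⟨hp, hlt⟩ := Finset.mem_filter.1 hp
  rw [Finset.mem_insert, Finset.mem_filter]
  by_cases h : w p.2 < w p.1
  · exact Or.inr ⟨hp, h⟩
  · left
    have hne : w p.1 ≠ w p.2 := fun h => (mem_posPairs.1 hp).ne (w.injective h)
    simp only [adjTrans, Equiv.Perm.mul_apply, Equiv.swap_apply_def] at hlt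
    have key : w p.1 = i.castSucc ∧ w p.2 = i.succ := by
      split_ifs at hlt <;> simp only [Fin.ext_iff, Fin.lt_def, Fin.val_castSucc,
        Fin.val_succ, ne_eq] at * <;> omega
    rw [← key.1, ← key.2]
    simp

theorem inversions_le_adjTrans_mul {n : ℕ} (i : Fin n) (w : Equiv.Perm (Fin (n + 1))) :
    inversions w ≤ inversions (adjTrans n i * w) + 1 := by
  simpa [← mul_assoc, adjTrans] using inversions_adjTrans_mul_le i (adjTrans n i * w)

theorem exists_lt_apply {N : ℕ} {w : Equiv.Perm (Fin N)} (hw : w ≠ 1) : ∃ i, i < w i := by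
  by_contra! h
  refine hw (Equiv.ext fun i => Fin.ext ?_)
  have hsum : ∑ i, (w i : ℕ) = ∑ i : Fin N, (i : ℕ) := Equiv.sum_comp w fun i : Fin N => (i : ℕ)
  exact (Finset.sum_eq_sum_iff_of_le fun i _ => Fin.le_def.1 (h i)).1 hsum i (Finset.mem_univ i)

variable {N : ℕ}

theorem sign_mul_self (w : Equiv.Perm (Fin N)) :
    ((Equiv.Perm.sign w : ℤ) : MvPolynomial (Fin N) ℤ) * (Equiv.Perm.sign w : ℤ) = 1 := by
  rw [← Int.cast_mul, ← Units.val_mul, Int.units_mul_self, Units.val_one, Int.cast_one]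

/-- The Vandermonde product `∏_{i < j} (X_j - X_i)`. -/
noncomputable def vandermonde (N : ℕ) : MvPolynomial (Fin N) ℤ :=
  ∏ p ∈ posPairs N, (X p.2 - X p.1)

theorem vandermonde_ne_zero (N : ℕ) : vandermonde N ≠ 0 := by
  refine Finset.prod_ne_zero_iff.2 fun p hp => sub_ne_zero.2 fun h => ?_
  exact (mem_posPairs.1 hp).ne' (X_injective h)

theorem vandermonde_eq_det (N : ℕ) :
    vandermonde N = (Matrix.vandermonde (X : Fin N → MvPolynomial (Fin N) ℤ)).det := by
  rw [Matrix.det_vandermonde, vandermonde, posPairs, Finset.prod_filter, Fintype.prod_prod_type]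
  refine Finset.prod_congr rfl fun i _ => ?_
  rw [← Finset.prod_filter, Finset.filter_lt_eq_Ioi]

theorem rename_vandermonde (w : Equiv.Perm (Fin N)) :
    rename w (vandermonde N) = (Equiv.Perm.sign w : ℤ) * vandermonde N := by
  rw [vandermonde_eq_det, AlgHom.map_det, ← Matrix.det_permute]
  congr 1
  ext1 i j
  simp [Matrix.vandermonde_apply]

theorem isUnit_of_C_dvd_vandermonde {c : ℤ} (h : C c ∣ vandermonde N) : IsUnit c := by
  by_contra hc
  obtain ⟨p, hp, hpc⟩ := Int.exists_prime_and_dvd (mt Int.isUnit_iff_natAbs_eq.2 hc)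
  have hp' : Prime (C p : MvPolynomial (Fin N) ℤ) := (prime_C_iff _).2 hp
  obtain ⟨q, hq, hdvd⟩ := hp'.exists_mem_finset_dvd ((map_dvd C hpc).trans h)
  have h1 := (C_dvd_iff_dvd_coeff _ _).1 hdvd (Finsupp.single q.2 1)
  have hne : q.1 ≠ q.2 := (mem_posPairs.1 hq).ne
  refine hp.not_isUnit (isUnit_of_dvd_one ?_)
  simpa [coeff_X, Finsupp.single_left_inj, hne] using h1

/-- The left factors in the expansion of `∏_{i < j} (Y_j - X_i)`. -/
noncomputable def leftFactor (S : Finset (Fin N × Fin N)) : MvPolynomial (Fin N) ℤ :=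
  ∏ p ∈ posPairs N \ S, (-X p.1)

/-- The right factors in the expansion of `∏_{i < j} (Y_j - X_i)`. -/
noncomputable def rightFactor (S : Finset (Fin N × Fin N)) : MvPolynomial (Fin N) ℤ :=
  ∏ p ∈ S, X p.2

theorem sum_rename_leftFactor_mul (w w' : Equiv.Perm (Fin N)) :
    ∑ S ∈ (posPairs N).powerset, rename w (leftFactor S) * rename w' (rightFactor S) =
      ∏ p ∈ posPairs N, (X (w' p.2) - X (w p.1)) := by
  simp_rw [sub_eq_add_neg, Finset.prod_add, leftFactor, rightFactor, map_prod, map_neg, rename_X,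
    mul_comm]

theorem prod_sub_eq_zero {w w' : Equiv.Perm (Fin N)} (h : w ≠ w') :
    ∏ p ∈ posPairs N, (X (w' p.2) - X (w p.1) : MvPolynomial (Fin N) ℤ) = 0 := by
  obtain ⟨i, hi⟩ := exists_lt_apply (w := w'⁻¹ * w) fun h' => h (inv_mul_eq_one.1 h').symm
  refine Finset.prod_eq_zero (i := (i, (w'⁻¹ * w) i)) (mem_posPairs.2 hi) ?_
  simp

theorem totalDegree_leftFactor_le (S : Finset (Fin N × Fin N)) :
    (leftFactor S).totalDegree ≤ (posPairs N \ S).card := by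
  refine (totalDegree_finsetProd _ _).trans ?_
  rw [Finset.card_eq_sum_ones]
  exact Finset.sum_le_sum fun p _ => by rw [totalDegree_neg, totalDegree_X]

/-- The antisymmetrization `∑_w sgn(w) w(P)`. -/
noncomputable def antisymmetrize (P : MvPolynomial (Fin N) ℤ) : MvPolynomial (Fin N) ℤ :=
  ∑ w : Equiv.Perm (Fin N), (Equiv.Perm.sign w : ℤ) * rename w P

theorem rename_antisymmetrize (w : Equiv.Perm (Fin N)) (P : MvPolynomial (Fin N) ℤ) :
    rename w (antisymmetrize P) = (Equiv.Perm.sign w : ℤ) * antisymmetrize P := by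
  rw [antisymmetrize, map_sum, Finset.mul_sum]
  refine Fintype.sum_equiv (Equiv.mulLeft w) _ _ fun v => ?_
  rw [map_mul, map_intCast, rename_rename, Equiv.coe_mulLeft, Equiv.Perm.sign_mul, Units.val_mul,
    Int.cast_mul, ← mul_assoc, ← mul_assoc, sign_mul_self, one_mul,
    Equiv.Perm.coe_mul]

theorem sum_leftFactor_mul_antisymmetrize (b : MvPolynomial (Fin N) ℤ) :
    ∑ S ∈ (posPairs N).powerset, leftFactor S * antisymmetrize (rightFactor S * b) =
      vandermonde N * b := by
  have h (w : Equiv.Perm (Fin N)) :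
      ∑ S ∈ (posPairs N).powerset, leftFactor S * rename w (rightFactor S) =
        if w = 1 then vandermonde N else 0 := by
    have h1 := sum_rename_leftFactor_mul 1 w
    simp only [Equiv.Perm.coe_one, rename_id_apply] at h1
    rw [h1]
    split_ifs with hw
    · rw [hw]
      rfl
    · exact prod_sub_eq_zero (w := 1) (Ne.symm hw)
  simp_rw [antisymmetrize, Finset.mul_sum, map_mul]
  rw [Finset.sum_comm]
  have h2 (w : Equiv.Perm (Fin N)) :
      ∑ S ∈ (posPairs N).powerset, leftFactor S * ((Equiv.Perm.sign w : ℤ) *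
        (rename w (rightFactor S) * rename w b)) =
      (if w = 1 then vandermonde N else 0) * ((Equiv.Perm.sign w : ℤ) * rename w b) := by
    rw [← h, Finset.sum_mul]
    exact Finset.sum_congr rfl fun S _ => by ring
  simp_rw [h2, ite_mul, zero_mul]
  simp

theorem isSymmetric_vandermonde_mul_of_rename {Q : MvPolynomial (Fin N) ℤ}
    (hQ : ∀ w : Equiv.Perm (Fin N), rename w Q = (Equiv.Perm.sign w : ℤ) * Q) :
    (vandermonde N * Q).IsSymmetric := by
  intro w
  rw [map_mul, hQ, rename_vandermonde, mul_mul_mul_comm, sign_mul_self, one_mul]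

theorem isSymmetric_of_vandermonde_mul {Q : MvPolynomial (Fin N) ℤ}
    (hQ : ∀ w : Equiv.Perm (Fin N),
      rename w (vandermonde N * Q) = (Equiv.Perm.sign w : ℤ) * (vandermonde N * Q)) :
    Q.IsSymmetric := by
  intro w
  have h := hQ w
  rw [map_mul, rename_vandermonde, mul_assoc] at h
  have hs : ((Equiv.Perm.sign w : ℤ) : MvPolynomial (Fin N) ℤ) ≠ 0 :=
    Int.cast_ne_zero.2 (Units.ne_zero _)
  exact mul_left_cancel₀ (vandermonde_ne_zero N) (mul_left_cancel₀ hs h)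

section Operators

variable {n : ℕ} {D : Fin n → MvPolynomial (Fin (n + 1)) ℤ →ₗ[ℤ] MvPolynomial (Fin (n + 1)) ℤ}

/-- The defining property of the family of Demazure operators. -/
def IsDemazure (D : Fin n → MvPolynomial (Fin (n + 1)) ℤ →ₗ[ℤ] MvPolynomial (Fin (n + 1)) ℤ) :
    Prop :=
  ∀ (i : Fin n) (P : MvPolynomial (Fin (n + 1)) ℤ),
    (X i.succ - X i.castSucc) * D i P = P - rename (Equiv.swap i.castSucc i.succ) P

/-- The composite of the operators `D i` along a word. -/
noncomputable def wordOp
    (D : Fin n → MvPolynomial (Fin (n + 1)) ℤ →ₗ[ℤ] MvPolynomial (Fin (n + 1)) ℤ)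
    (l : List (Fin n)) (P : MvPolynomial (Fin (n + 1)) ℤ) : MvPolynomial (Fin (n + 1)) ℤ :=
  l.foldr (fun i Q => D i Q) P

theorem wordOp_cons (i : Fin n) (l : List (Fin n)) (P : MvPolynomial (Fin (n + 1)) ℤ) :
    wordOp D (i :: l) P = D i (wordOp D l P) := rfl

theorem wordOp_sum {ι : Type*} (l : List (Fin n)) (s : Finset ι)
    (f : ι → MvPolynomial (Fin (n + 1)) ℤ) :
    wordOp D l (∑ k ∈ s, f k) = ∑ k ∈ s, wordOp D l (f k) := by
  induction l with
  | nil => rfl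
  | cons i l ih => simp only [wordOp_cons, ih, map_sum]

theorem root_ne_zero (i : Fin n) :
    (X i.succ - X i.castSucc : MvPolynomial (Fin (n + 1)) ℤ) ≠ 0 :=
  sub_ne_zero.2 fun h => i.castSucc_lt_succ.ne' (X_injective h)

theorem totalDegree_root (i : Fin n) :
    (X i.succ - X i.castSucc : MvPolynomial (Fin (n + 1)) ℤ).totalDegree = 1 :=
  ((isHomogeneous_X ℤ i.succ).sub (isHomogeneous_X ℤ i.castSucc)).totalDegree (root_ne_zero i)

theorem wordOp_symmetric_mul (hD : IsDemazure D) (l : List (Fin n))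
    {f : MvPolynomial (Fin (n + 1)) ℤ} (hf : f.IsSymmetric) (P : MvPolynomial (Fin (n + 1)) ℤ) :
    wordOp D l (f * P) = f * wordOp D l P := by
  induction l with
  | nil => rfl
  | cons i l ih =>
    rw [wordOp_cons, wordOp_cons, ih]
    refine mul_left_cancel₀ (root_ne_zero i) ?_
    rw [hD, map_mul, hf, mul_left_comm, hD, mul_sub]

theorem wordOp_eq_zero_or_totalDegree_le (hD : IsDemazure D) (l : List (Fin n))
    (P : MvPolynomial (Fin (n + 1)) ℤ) :
    wordOp D l P = 0 ∨ (wordOp D l P).totalDegree + l.length ≤ P.totalDegree := by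
  induction l with
  | nil => exact Or.inr le_rfl
  | cons i l ih =>
    rw [wordOp_cons, or_iff_not_imp_left]
    intro h
    have h0 : wordOp D l P ≠ 0 := fun h0 => h (by rw [h0, map_zero])
    have h1 := totalDegree_mul_of_isDomain (root_ne_zero i) h
    have h2 := (totalDegree_sub (wordOp D l P)
      (rename (Equiv.swap i.castSucc i.succ) (wordOp D l P))).trans
        (max_le le_rfl (totalDegree_rename_le _ _))
    rw [hD, totalDegree_root] at h1
    have h3 := ih.resolve_left h0
    rw [List.length_cons]
    omega

theorem exists_vandermonde_mul_wordOp (hD : IsDemazure D) {l : List (Fin n)}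
    (hl : (posPairs (n + 1)).card ≤ l.length) :
    ∃ c : ℤ, ∀ P, vandermonde (n + 1) * wordOp D l P = C c * antisymmetrize P := by
  have hS {S} (hST : S ⊆ posPairs (n + 1)) (hne : S ≠ ∅) : wordOp D l (leftFactor S) = 0 := by
    refine (wordOp_eq_zero_or_totalDegree_le hD l _).resolve_right fun h => ?_
    have h1 := totalDegree_leftFactor_le S
    have h2 := Finset.card_sdiff_add_card_eq_card hST
    have h3 := Finset.card_pos.2 (Finset.nonempty_iff_ne_empty.2 hne)
    omega
  obtain ⟨c, hc⟩ : ∃ c : ℤ, wordOp D l (leftFactor ∅) = C c := by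
    rcases wordOp_eq_zero_or_totalDegree_le hD l (leftFactor ∅) with h | h
    · exact ⟨0, by rw [h, map_zero]⟩
    · have h1 := totalDegree_leftFactor_le (∅ : Finset (Fin (n + 1) × Fin (n + 1)))
      rw [Finset.sdiff_empty] at h1
      exact ⟨_, totalDegree_eq_zero_iff_eq_C.1 (by omega)⟩
  refine ⟨c, fun P => mul_left_cancel₀ (vandermonde_ne_zero _) ?_⟩
  have hV : (vandermonde (n + 1) * vandermonde (n + 1)).IsSymmetric :=
    isSymmetric_vandermonde_mul_of_rename rename_vandermonde
  rw [← mul_assoc, ← wordOp_symmetric_mul hD l hV, mul_assoc,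
    ← sum_leftFactor_mul_antisymmetrize P,
    Finset.mul_sum, wordOp_sum, Finset.sum_eq_single_of_mem ∅ (Finset.empty_mem_powerset _)]
  · rw [mul_left_comm, mul_comm, wordOp_symmetric_mul hD l
      (isSymmetric_vandermonde_mul_of_rename fun w => rename_antisymmetrize w _), hc, rightFactor,
      Finset.prod_empty, one_mul]
    ring
  · intro S hST hne
    rw [mul_left_comm, mul_comm, wordOp_symmetric_mul hD l
      (isSymmetric_vandermonde_mul_of_rename fun w => rename_antisymmetrize w _),
      hS (Finset.mem_powerset.1 hST) hne, mul_zero]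

/-- The value of `∂_l` applied to `∏_{i < j} (Y_j - X_i)` in the variables `Y`, at `X = w(Y)`. -/
noncomputable def localization
    (D : Fin n → MvPolynomial (Fin (n + 1)) ℤ →ₗ[ℤ] MvPolynomial (Fin (n + 1)) ℤ)
    (l : List (Fin n)) (w : Equiv.Perm (Fin (n + 1))) : MvPolynomial (Fin (n + 1)) ℤ :=
  ∑ S ∈ (posPairs (n + 1)).powerset, rename w (leftFactor S) * wordOp D l (rightFactor S)

theorem localization_nil (w : Equiv.Perm (Fin (n + 1))) :
    localization D [] w = if w = 1 then vandermonde (n + 1) else 0 := by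
  have h := sum_rename_leftFactor_mul w 1
  simp only [Equiv.Perm.coe_one, rename_id_apply] at h
  rw [localization]
  refine h.trans ?_
  split_ifs with hw
  · rw [hw]
    rfl
  · exact prod_sub_eq_zero (w' := 1) hw

theorem root_mul_localization_cons (hD : IsDemazure D) (i : Fin n) (l : List (Fin n))
    (w : Equiv.Perm (Fin (n + 1))) :
    (X i.succ - X i.castSucc) * localization D (i :: l) w =
      localization D l w - rename (adjTrans n i) (localization D l (adjTrans n i * w)) := by
  have hs : adjTrans n i ∘ (adjTrans n i * w) = w := by
    rw [← Equiv.Perm.coe_mul, ← mul_assoc, adjTrans, Equiv.swap_mul_self, one_mul]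
  simp_rw [localization, map_sum, map_mul, rename_rename, hs]
  rw [← Finset.sum_sub_distrib, Finset.mul_sum]
  refine Finset.sum_congr rfl fun S _ => ?_
  rw [← mul_sub, mul_left_comm, wordOp_cons, hD, adjTrans]

theorem localization_eq_zero (hD : IsDemazure D) {l : List (Fin n)}
    {w : Equiv.Perm (Fin (n + 1))} (hw : l.length < inversions w) : localization D l w = 0 := by
  induction l generalizing w with
  | nil =>
    rw [localization_nil, if_neg]
    rintro rfl
    refine hw.ne' (Finset.card_eq_zero.2 (Finset.filter_false_of_mem fun p hp => ?_))
    exact (mem_posPairs.1 hp).not_gt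
  | cons i l ih =>
    have h := inversions_le_adjTrans_mul i w
    rw [List.length_cons] at hw
    refine (mul_eq_zero.1 ?_).resolve_left (root_ne_zero i)
    rw [root_mul_localization_cons hD, ih (by omega), ih (by omega), map_zero, sub_zero]

theorem localization_prod_dvd (hD : IsDemazure D) {l : List (Fin n)}
    (hl : l.length ≤ inversions (l.map (adjTrans n)).prod) :
    localization D l (l.map (adjTrans n)).prod ∣
      rename (l.map (adjTrans n)).prod (vandermonde (n + 1)) := by
  induction l with
  | nil => simp [localization_nil]
  | cons i l ih =>
    rw [List.map_cons, List.prod_cons, List.length_cons] at *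
    set w := (l.map (adjTrans n)).prod
    have h := inversions_adjTrans_mul_le i w
    have hs : adjTrans n i * (adjTrans n i * w) = w := by
      rw [← mul_assoc, adjTrans, Equiv.swap_mul_self, one_mul]
    have h1 := root_mul_localization_cons hD i l (adjTrans n i * w)
    rw [localization_eq_zero hD (l := l) (w := adjTrans n i * w) (by omega), hs, zero_sub] at h1
    have h2 := map_dvd (rename (adjTrans n i)) (ih (by omega))
    rw [rename_rename, ← Equiv.Perm.coe_mul] at h2
    exact (Dvd.intro_left _ h1).trans ((neg_dvd).2 h2)

theorem isSymmetric_wordOp {l : List (Fin n)} {c : ℤ}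
    (hc : ∀ P, vandermonde (n + 1) * wordOp D l P = C c * antisymmetrize P)
    (P : MvPolynomial (Fin (n + 1)) ℤ) : (wordOp D l P).IsSymmetric :=
  isSymmetric_of_vandermonde_mul fun w => by
    rw [hc, map_mul, rename_C, rename_antisymmetrize, mul_left_comm]

theorem sum_leftFactor_mul_wordOp {l : List (Fin n)} {c : ℤ}
    (hc : ∀ P, vandermonde (n + 1) * wordOp D l P = C c * antisymmetrize P)
    (b : MvPolynomial (Fin (n + 1)) ℤ) :
    ∑ S ∈ (posPairs (n + 1)).powerset, leftFactor S * wordOp D l (rightFactor S * b) =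
      C c * b := by
  refine mul_left_cancel₀ (vandermonde_ne_zero _) ?_
  simp_rw [Finset.mul_sum, mul_left_comm (vandermonde (n + 1)), hc, mul_left_comm _ (C c),
    ← Finset.mul_sum, sum_leftFactor_mul_antisymmetrize]

theorem exists_isUnit_vandermonde_mul_wordOp (hD : IsDemazure D) {l : List (Fin n)}
    (hl : (l.map (adjTrans n)).prod = (Fin.revPerm : Equiv.Perm (Fin (n + 1))))
    (hlen : l.length = (n + 1) * n / 2) :
    ∃ c : ℤ, IsUnit c ∧
      ∀ P, vandermonde (n + 1) * wordOp D l P = C c * antisymmetrize P := by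
  obtain ⟨c, hc⟩ := exists_vandermonde_mul_wordOp hD (l := l) (by
    rw [card_posPairs, hlen, Nat.add_sub_cancel])
  refine ⟨c, isUnit_of_C_dvd_vandermonde (N := n + 1) ?_, hc⟩
  have hdvd := localization_prod_dvd hD (l := l) (by
    rw [hl, inversions_revPerm, hlen, Nat.add_sub_cancel])
  have hloc (w : Equiv.Perm (Fin (n + 1))) : localization D l w = C c := by
    have h := congrArg (rename w) (sum_leftFactor_mul_wordOp hc 1)
    simpa only [localization, map_sum, map_mul, mul_one, isSymmetric_wordOp hc _ w,
      rename_C] using h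
  rw [hloc, rename_vandermonde] at hdvd
  have hsign : IsUnit (((Equiv.Perm.sign (l.map (adjTrans n)).prod : ℤ) :
      MvPolynomial (Fin (n + 1)) ℤ)) :=
    (Units.isUnit _).map (Int.castRingHom _)
  exact hsign.dvd_mul_left.1 hdvd

end Operators

end Demazure

/-- Let `∂_{w0}` be the composite of Demazure operators associated to a reduced
expression of the longest element `w0` of `S_{n+1}`. Then (a) `∂_{w0}(P)` is a
symmetric polynomial for every `P`; and (b) `∂_{w0}` is a symmetrizing form for
`P_n = ℤ[X_1, …, X_{n+1}]` over the subring `P_n^{S_{n+1}}` of symmetric polynomials: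
the map `a ↦ (b ↦ ∂_{w0}(ab))` from `P_n` to the `P_n^{S_{n+1}}`-linear forms on `P_n`
with values in `P_n^{S_{n+1}}` is bijective.  (A `P_n^{S_{n+1}}`-linear form on `P_n` is
encoded as a `P_n^{S_{n+1}}`-linear map `ψ : P_n → P_n` all of whose values are
symmetric polynomials.) -/
theorem demazure_longest_is_symmetrizing_form (n : ℕ)
    (D : Fin n → MvPolynomial (Fin (n + 1)) ℤ →ₗ[ℤ] MvPolynomial (Fin (n + 1)) ℤ)
    (hD : ∀ (i : Fin n) (P : MvPolynomial (Fin (n + 1)) ℤ),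
      (X i.succ - X i.castSucc) * D i P =
        P - rename (Equiv.swap i.castSucc i.succ) P)
    (l0 : List (Fin n))
    (hl0 : ((l0.map (adjTrans n)).prod = (Fin.revPerm : Equiv.Perm (Fin (n + 1)))))
    (hlen : l0.length = (n + 1) * n / 2) :
    (∀ P : MvPolynomial (Fin (n + 1)) ℤ,
      (l0.foldr (fun i Q => D i Q) P).IsSymmetric) ∧
    (∀ ψ : MvPolynomial (Fin (n + 1)) ℤ
        →ₗ[symmetricSubalgebra (Fin (n + 1)) ℤ] MvPolynomial (Fin (n + 1)) ℤ,
      (∀ b, (ψ b).IsSymmetric) →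
      ∃! a : MvPolynomial (Fin (n + 1)) ℤ,
        ∀ b : MvPolynomial (Fin (n + 1)) ℤ,
          ψ b = l0.foldr (fun i Q => D i Q) (a * b)) := by
 
  have hD' : Demazure.IsDemazure D := hD
  obtain ⟨c, hu, hc⟩ := Demazure.exists_isUnit_vandermonde_mul_wordOp hD' hl0 hlen
  have hcc : (C c : MvPolynomial (Fin (n + 1)) ℤ) * C c = 1 := by
    rw [← C_mul, Int.isUnit_mul_self hu, C_1]
  have hsymm := Demazure.isSymmetric_wordOp hc
  have hrep := Demazure.sum_leftFactor_mul_wordOp hc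
  refine ⟨hsymm, fun ψ hψ => ?_⟩
  change ∃! a, ∀ b, ψ b = Demazure.wordOp D l0 (a * b)
  have hlin {f : MvPolynomial (Fin (n + 1)) ℤ} (hf : f.IsSymmetric)
      (b : MvPolynomial (Fin (n + 1)) ℤ) : ψ (f * b) = f * ψ b :=
    ψ.map_smul (⟨f, hf⟩ : symmetricSubalgebra (Fin (n + 1)) ℤ) b
  have hCc : (C c : MvPolynomial (Fin (n + 1)) ℤ).IsSymmetric := IsSymmetric.C c
  refine existsUnique_of_exists_of_unique ⟨C c * ∑ S ∈ (Demazure.posPairs (n + 1)).powerset,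
    ψ (Demazure.leftFactor S) * Demazure.rightFactor S, fun b => ?_⟩ fun a a' ha ha' => ?_
  · have h := congrArg ψ (hrep b)
    rw [hlin hCc, map_sum] at h
    rw [mul_assoc, Demazure.wordOp_symmetric_mul hD' l0 hCc, Finset.sum_mul, Demazure.wordOp_sum,
      ← one_mul (ψ b), ← hcc, mul_assoc, ← h]
    congr 1
    refine Finset.sum_congr rfl fun S _ => ?_
    rw [mul_comm (Demazure.leftFactor S), hlin (hsymm _), mul_assoc,
      Demazure.wordOp_symmetric_mul hD' l0 (hψ _), mul_comm]
  · refine mul_left_cancel₀ (left_ne_zero_of_mul_eq_one hcc) ?_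
    rw [← hrep, ← hrep]
    refine Finset.sum_congr rfl fun S _ => ?_
    rw [mul_comm _ a, mul_comm _ a', ← ha, ← ha']
end
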